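/- arXiv:1604.01283 — 3 statements merged into one kernel-verified Lean document; each statement's English description precedes it below -/
import Mathlib

section
/- Let A be a ring such that the finitely presented right A-modules form an abelian category. Then every non-zero subadditive function χ on the finitely presented A-modules can be written as a finite sum χ = χ_1 + ⋯ + χ_n of irreducible subadditive functions, and this decomposition is unique up to reordering. -/
/-- The composition length of a module (the length of a composition series,
zero if none exists). -/
noncomputable def compLength (R : Type) [Ring R] (M : Type) [AddCommGroup M] [Module R M] : ℕ := by
  classical
  exact if h : ∃ s : CompositionSeries (Submodule R M), s.head = ⊥ ∧ s.last = ⊤ then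
    h.choose.length else 0

/-- A module `M` is endofinite if it has finite composition length over its
endomorphism ring, which acts on `M` by application. -/
def IsEndofinite (A : Type) [Ring A] (M : Type) [AddCommGroup M] [Module A M] : Prop :=
  IsFiniteLength (Module.End A M) M

/-- The subadditive function `χ_M` associated to a module `M`:
`χ_M(X) = ℓ_{End_A(M)} Hom_A(X, M)`, where `End_A(M)` acts by postcomposition. -/
noncomputable def chiMod (A : Type) [Ring A] (M : Type) [AddCommGroup M] [Module A M]
    (X : Type) [AddCommGroup X] [Module A X] : ℕ :=
  compLength (Module.End A M) (X →ₗ[A] M)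

/-- A subadditive function on the finitely presented `A`-modules: it depends only on
the isomorphism class, is additive on direct sums, and satisfies
`χ(X) + χ(Z) ≥ χ(Y)` for every exact sequence `X → Y → Z → 0`. -/
def IsSubadditive (A : Type) [Ring A]
    (χ : (X : Type) → [AddCommGroup X] → [Module A X] → ℕ) : Prop :=
  (∀ (X Y : Type) [AddCommGroup X] [Module A X] [AddCommGroup Y] [Module A Y],
      Module.FinitePresentation A X → Module.FinitePresentation A Y →
      (X ≃ₗ[A] Y) → χ X = χ Y) ∧
  (∀ (X Y : Type) [AddCommGroup X] [Module A X] [AddCommGroup Y] [Module A Y],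
      Module.FinitePresentation A X → Module.FinitePresentation A Y →
      χ (X × Y) = χ X + χ Y) ∧
  (∀ (X Y Z : Type) [AddCommGroup X] [Module A X] [AddCommGroup Y] [Module A Y]
      [AddCommGroup Z] [Module A Z],
      Module.FinitePresentation A X → Module.FinitePresentation A Y →
      Module.FinitePresentation A Z →
      ∀ (f : X →ₗ[A] Y) (g : Y →ₗ[A] Z),
      Function.Exact f g → Function.Surjective g → χ Y ≤ χ X + χ Z)

/-- Membership in the additive locus `Adloc(χ)`: `Z` is finitely presented and
`χ(X) - χ(Y) + χ(Z) = 0` for every short exact sequence `0 → X → Y → Z → 0` of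
finitely presented modules. -/
def MemAdloc (A : Type) [Ring A]
    (χ : (X : Type) → [AddCommGroup X] → [Module A X] → ℕ)
    (Z : Type) [AddCommGroup Z] [Module A Z] : Prop :=
  Module.FinitePresentation A Z ∧
  ∀ (X Y : Type) [AddCommGroup X] [Module A X] [AddCommGroup Y] [Module A Y],
    Module.FinitePresentation A X → Module.FinitePresentation A Y →
    ∀ (f : X →ₗ[A] Y) (g : Y →ₗ[A] Z),
    Function.Injective f → Function.Exact f g → Function.Surjective g →
    χ X + χ Z = χ Y

/-- The hypothesis that the finitely presented `A`-modules form an abelian category: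
kernels of maps between finitely presented modules are finitely presented. -/
def FpAbelian (A : Type) [Ring A] : Prop :=
  ∀ (X Y : Type) [AddCommGroup X] [Module A X] [AddCommGroup Y] [Module A Y],
    Module.FinitePresentation A X → Module.FinitePresentation A Y →
    ∀ f : X →ₗ[A] Y, Module.FinitePresentation A (LinearMap.ker f)

/-- Two functions agree on all finitely presented `A`-modules. -/
def FpEq (A : Type) [Ring A]
    (χ χ' : (X : Type) → [AddCommGroup X] → [Module A X] → ℕ) : Prop :=
  ∀ (X : Type) [AddCommGroup X] [Module A X], Module.FinitePresentation A X → χ X = χ' X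

/-- A function is non-zero on the finitely presented `A`-modules. -/
def FpNonzero (A : Type) [Ring A]
    (χ : (X : Type) → [AddCommGroup X] → [Module A X] → ℕ) : Prop :=
  ∃ (X : Type) (_ : AddCommGroup X) (_ : Module A X),
    Module.FinitePresentation A X ∧ χ X ≠ 0

/-- A subadditive function is irreducible if it is non-zero and is not the sum of two
non-zero subadditive functions. -/
def IsIrreducibleSubadditive (A : Type) [Ring A]
    (χ : (X : Type) → [AddCommGroup X] → [Module A X] → ℕ) : Prop :=
  IsSubadditive A χ ∧ FpNonzero A χ ∧
  ¬ ∃ χ₁ χ₂ : (X : Type) → [AddCommGroup X] → [Module A X] → ℕ,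
      IsSubadditive A χ₁ ∧ IsSubadditive A χ₂ ∧ FpNonzero A χ₁ ∧ FpNonzero A χ₂ ∧
      FpEq A χ (fun X _ _ => χ₁ X + χ₂ X)

namespace SA
section Abs
variable {L : Type*} [Preorder L]

inductive Reach (v w : L → ℤ) : L → L → ℕ → Prop
  | sv (a b : L) (n : ℕ) : a ≤ b → v b - v a ≤ n → Reach v w a b n
  | sw (a b : L) (n : ℕ) : a ≤ b → w b - w a ≤ n → Reach v w a b n
  | tr (a b c : L) (n k : ℕ) : Reach v w a b n → Reach v w b c k → Reach v w a c (n + k)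

theorem Reach.le {v w : L → ℤ} {a b : L} {n : ℕ} (h : Reach v w a b n) : a ≤ b := by
  induction h with
  | sv a b n h _ => exact h
  | sw a b n h _ => exact h
  | tr a b c n k _ _ h1 h2 => exact h1.trans h2

theorem Reach.map {L' : Type*} [Preorder L'] {v w : L → ℤ} {v' w' : L' → ℤ} (F : L → L') (lo hi : L)
    (hF : ∀ x y, lo ≤ x → x ≤ y → y ≤ hi →
      F x ≤ F y ∧ v' (F y) - v' (F x) ≤ v y - v x ∧ w' (F y) - w' (F x) ≤ w y - w x)
    {a b : L} {n : ℕ} (h : Reach v w a b n) : lo ≤ a → b ≤ hi → Reach v' w' (F a) (F b) n := by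
  induction h with
  | sv a b n h hn =>
    intro h1 h2
    obtain ⟨h3, h4, h5⟩ := hF a b h1 h h2
    exact .sv _ _ _ h3 (h4.trans hn)
  | sw a b n h hn =>
    intro h1 h2
    obtain ⟨h3, h4, h5⟩ := hF a b h1 h h2
    exact .sw _ _ _ h3 (h5.trans hn)
  | tr a b c n k r1 r2 i1 i2 =>
    intro h1 h2
    exact .tr _ _ _ _ _ (i1 h1 (r2.le.trans h2)) (i2 (h1.trans r1.le) h2)

noncomputable def mm (v w : L → ℤ) (a b : L) : ℕ := sInf {n | Reach v w a b n}

theorem mm_le {v w : L → ℤ} {a b : L} {n : ℕ} (h : Reach v w a b n) : mm v w a b ≤ n :=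
  Nat.sInf_le h

theorem reach_mm {v w : L → ℤ} {a b : L} (h : a ≤ b) : Reach v w a b (mm v w a b) :=
  Nat.sInf_mem (s := {n | Reach v w a b n}) ⟨(v b - v a).toNat, .sv _ _ _ h (Int.self_le_toNat _)⟩

theorem mm_le_v {v w : L → ℤ} (hv : Monotone v) {a b : L} (h : a ≤ b) :
    (mm v w a b : ℤ) ≤ v b - v a := by
  have := mm_le (v := v) (w := w) (.sv a b (v b - v a).toNat h (Int.self_le_toNat _))
  have := hv h
  omega

theorem mm_le_w {v w : L → ℤ} (hv : Monotone w) {a b : L} (h : a ≤ b) :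
    (mm v w a b : ℤ) ≤ w b - w a := by
  have := mm_le (v := v) (w := w) (.sw a b (w b - w a).toNat h (Int.self_le_toNat _))
  have := hv h
  omega

/-- shrink an interval up to equivalence -/
theorem Reach.congr {v w : L → ℤ} (hv : Monotone v) {a b a' b' : L} {n : ℕ} (h : Reach v w a b n)
    (h1 : a ≤ a') (h2 : a' ≤ a) (h3 : b ≤ b') (h4 : b' ≤ b) : Reach v w a' b' n := by
  have e1 : Reach v w a' a 0 := .sv _ _ _ h2 (by have := hv h1; simp; omega)
  have e2 : Reach v w b b' 0 := .sv _ _ _ h3 (by have := hv h4; simp; omega)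
  simpa using (e1.tr _ _ _ _ _ h).tr _ _ _ _ _ e2

structure LatOps (sup inf : L → L → L) (v w : L → ℤ) : Prop where
  le_sup_left : ∀ a b, a ≤ sup a b
  le_sup_right : ∀ a b, b ≤ sup a b
  sup_le : ∀ a b c, a ≤ c → b ≤ c → sup a b ≤ c
  inf_le_left : ∀ a b, inf a b ≤ a
  inf_le_right : ∀ a b, inf a b ≤ b
  le_inf : ∀ a b c, c ≤ a → c ≤ b → c ≤ inf a b
  mv : Monotone v
  mw : Monotone w
  modv : ∀ a b, v (sup a b) + v (inf a b) = v a + v b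
  modw : ∀ a b, w (sup a b) + w (inf a b) = w a + w b

theorem Reach.split {sup inf : L → L → L} {v w : L → ℤ} (H : LatOps sup inf v w) (b : L)
    {a c : L} {n : ℕ} (h : Reach v w a c n) :
    ∃ n1 n2, n1 + n2 ≤ n ∧ Reach v w (inf a b) (inf c b) n1 ∧ Reach v w (sup a b) (sup c b) n2 := by
  have key : ∀ a c, a ≤ c → inf a b ≤ inf c b ∧ sup a b ≤ sup c b := fun a c h =>
    ⟨H.le_inf _ _ _ ((H.inf_le_left _ _).trans h) (H.inf_le_right _ _),
      H.sup_le _ _ _ (h.trans (H.le_sup_left _ _)) (H.le_sup_right _ _)⟩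
  induction h with
  | sv a c n h hn =>
    obtain ⟨k1, k2⟩ := key a c h
    refine ⟨(v (inf c b) - v (inf a b)).toNat, (v (sup c b) - v (sup a b)).toNat, ?_,
      .sv _ _ _ k1 (Int.self_le_toNat _), .sv _ _ _ k2 (Int.self_le_toNat _)⟩
    have := H.mv k1
    have := H.mv k2
    have := H.modv a b
    have := H.modv c b
    omega
  | sw a c n h hn =>
    obtain ⟨k1, k2⟩ := key a c h
    refine ⟨(w (inf c b) - w (inf a b)).toNat, (w (sup c b) - w (sup a b)).toNat, ?_,
      .sw _ _ _ k1 (Int.self_le_toNat _), .sw _ _ _ k2 (Int.self_le_toNat _)⟩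
    have := H.mw k1
    have := H.mw k2
    have := H.modw a b
    have := H.modw c b
    omega
  | tr a d c n k r1 r2 i1 i2 =>
    obtain ⟨n1, n2, h1, h2, h3⟩ := i1
    obtain ⟨m1, m2, g1, g2, g3⟩ := i2
    exact ⟨n1 + m1, n2 + m2, by omega, .tr _ _ _ _ _ h2 g2, .tr _ _ _ _ _ h3 g3⟩

theorem mm_add {sup inf : L → L → L} {v w : L → ℤ} (H : LatOps sup inf v w) {a b c : L}
    (h1 : a ≤ b) (h2 : b ≤ c) : mm v w a c = mm v w a b + mm v w b c := by
  apply le_antisymm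
  · exact mm_le (.tr _ _ _ _ _ (reach_mm h1) (reach_mm h2))
  · obtain ⟨n1, n2, h3, h4, h5⟩ := (reach_mm (v := v) (w := w) (h1.trans h2)).split H b
    have e1 := mm_le (h4.congr H.mv (H.inf_le_left _ _) (H.le_inf _ _ _ le_rfl h1)
      (H.inf_le_right _ _) (H.le_inf _ _ _ h2 le_rfl))
    have e2 := mm_le (h5.congr H.mv (H.sup_le _ _ _ h1 le_rfl) (H.le_sup_right _ _)
      (H.sup_le _ _ _ le_rfl h2) (H.le_sup_left _ _))
    omega

theorem prime_aux {sup inf : L → L → L} {p a b : L → ℤ} (H : LatOps sup inf p b)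
    (ha : Monotone a)
    (hle : ∀ x y, x ≤ y → p y - p x ≤ (a y - a x) + (b y - b x)) {x y : L} (h : x ≤ y) :
    p y - p x ≤ mm p a x y + mm p b x y := by
  have s1 : ∀ {x y : L} {n : ℕ}, Reach p b x y n → p y - p x ≤ a y - a x + n := by
    intro x y n h
    induction h with
    | sv x y n h hn => have := ha h; omega
    | sw x y n h hn => have := hle _ _ h; omega
    | tr x y z n k r1 r2 i1 i2 => push_cast; omega
  have s2 : ∀ {x y : L} {n : ℕ}, Reach p a x y n → p y - p x ≤ n + mm p b x y := by
    intro x y n h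
    induction h with
    | sv x y n h hn => omega
    | sw x y n h hn => have := s1 (reach_mm (v := p) (w := b) h); omega
    | tr x y z n k r1 r2 i1 i2 =>
      have := mm_add H r1.le r2.le
      push_cast; omega
  exact s2 (reach_mm h)

end Abs
end SA
namespace SA
section Mod
open LinearMap
abbrev Fn (A : Type) [Ring A] : Type 1 := (X : Type) → [AddCommGroup X] → [Module A X] → ℕ

variable {A : Type} [Ring A]

theorem chi_surj {χ : Fn A} (hχ : IsSubadditive A χ) {Y Z1 Z2 : Type} [AddCommGroup Y] [Module A Y]
    [AddCommGroup Z1] [Module A Z1] [AddCommGroup Z2] [Module A Z2]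
    (h1 : Module.FinitePresentation A Z1) (h2 : Module.FinitePresentation A Z2)
    (g1 : Y →ₗ[A] Z1) (g2 : Y →ₗ[A] Z2) (s1 : Function.Surjective g1) (s2 : Function.Surjective g2)
    (h : ∀ y, g1 y = 0 ↔ g2 y = 0) : χ Z1 = χ Z2 := by
  have hk : ker g1 = ker g2 := by ext y; simpa using h y
  exact hχ.1 _ _ h1 h2 ((g1.quotKerEquivOfSurjective s1).symm.trans
    ((Submodule.quotEquivOfEq _ _ hk).trans (g2.quotKerEquivOfSurjective s2)))

theorem fp_coker {X Y : Type} [AddCommGroup X] [Module A X] [AddCommGroup Y] [Module A Y]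
    (hX : Module.FinitePresentation A X) (hY : Module.FinitePresentation A Y) (f : X →ₗ[A] Y) :
    Module.FinitePresentation A (Y ⧸ range f) := by
  refine Module.finitePresentation_of_surjective (Submodule.mkQ _) (Submodule.mkQ_surjective _) ?_
  rw [Submodule.ker_mkQ, LinearMap.range_eq_map]
  exact Module.Finite.fg_top.map f

theorem chi_sub {χ : Fn A} (hχ : IsSubadditive A χ) {Z : Type} [AddCommGroup Z] [Module A Z]
    [Subsingleton Z] : χ Z = 0 := by
  have h : Module.FinitePresentation A Z := inferInstance
  have e1 := hχ.2.1 Z Z h h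
  have e2 := hχ.1 (Z × Z) Z inferInstance h
    { toFun := fun _ => 0, invFun := fun _ => 0, map_add' := by simp, map_smul' := by simp,
      left_inv := fun _ => Subsingleton.elim _ _, right_inv := fun _ => Subsingleton.elim _ _ }
  omega

structure UObj (A : Type) [Ring A] (X : Type) [AddCommGroup X] [Module A X] : Type 1 where
  C : Type
  [grp : AddCommGroup C]
  [mod : Module A C]
  fp : Module.FinitePresentation A C
  map : X →ₗ[A] C

attribute [instance] UObj.grp UObj.mod UObj.fp

variable {X : Type} [AddCommGroup X] [Module A X]

instance : Preorder (UObj A X) where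
  le u w := ∃ h : w.C →ₗ[A] u.C, ∀ x, h (w.map x) = u.map x
  le_refl u := ⟨LinearMap.id, fun _ => rfl⟩
  le_trans := by
    rintro a b c ⟨h, hh⟩ ⟨k, hk⟩
    exact ⟨h ∘ₗ k, fun x => by simp [hk, hh]⟩

theorem le_iff {u w : UObj A X} : u ≤ w ↔ ∃ h : w.C →ₗ[A] u.C, ∀ x, h (w.map x) = u.map x := Iff.rfl

noncomputable def val (χ : Fn A) (u : UObj A X) : ℤ := (χ u.C : ℤ) - χ (u.C ⧸ range u.map)

theorem val_eq {χ : Fn A} (hχ : IsSubadditive A χ) (hX : Module.FinitePresentation A X)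
    (u : UObj A X) {Z : Type} [AddCommGroup Z] [Module A Z] (hZ : Module.FinitePresentation A Z)
    (g : u.C →ₗ[A] Z) (hg : Function.Surjective g) (he : ∀ c, g c = 0 ↔ ∃ x, u.map x = c) :
    val χ u = χ u.C - χ Z := by
  unfold val
  rw [chi_surj hχ (fp_coker hX u.fp u.map) hZ (Submodule.mkQ _) g (Submodule.mkQ_surjective _) hg]
  intro y
  simp [he]

def osup (u w : UObj A X) : UObj A X := ⟨u.C × w.C, inferInstance, u.map.prod w.map⟩

def oinf (hX : Module.FinitePresentation A X) (u w : UObj A X) : UObj A X :=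
  ⟨(u.C × w.C) ⧸ range (u.map.prod w.map), fp_coker hX inferInstance _,
    Submodule.mkQ _ ∘ₗ LinearMap.inl A _ _ ∘ₗ u.map⟩

def obot : UObj A X := ⟨PUnit, inferInstance, 0⟩
def otop (hX : Module.FinitePresentation A X) : UObj A X := ⟨X, hX, LinearMap.id⟩

theorem obot_le (u : UObj A X) : obot ≤ u := ⟨0, fun _ => rfl⟩
theorem le_otop (hX : Module.FinitePresentation A X) (u : UObj A X) : u ≤ otop hX :=
  ⟨u.map, fun _ => rfl⟩

theorem val_mono {χ : Fn A} (hχ : IsSubadditive A χ) (hX : Module.FinitePresentation A X) :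
    Monotone (val χ : UObj A X → ℤ) := by
  rintro u w ⟨h, hh⟩
  unfold val
  have f1 := fp_coker hX w.fp w.map
  have f2 := fp_coker hX u.fp u.map
  have hk : range w.map ≤ (range u.map).comap h := by
    rintro _ ⟨x, rfl⟩; exact ⟨x, (hh x).symm⟩
  have := hχ.2.2 w.C (u.C × (w.C ⧸ range w.map)) (u.C ⧸ range u.map) w.fp inferInstance f2
    (h.prod (Submodule.mkQ _))
    ((Submodule.mkQ _) ∘ₗ LinearMap.fst A _ _ - (Submodule.mapQ _ _ h hk) ∘ₗ LinearMap.snd A _ _)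
    (by
      rintro ⟨a, b⟩
      obtain ⟨b, rfl⟩ := Submodule.mkQ_surjective _ b
      constructor
      · intro e
        simp only [LinearMap.sub_apply, LinearMap.comp_apply, LinearMap.fst_apply,
          LinearMap.snd_apply, Submodule.mkQ_apply, Submodule.mapQ_apply, ← Submodule.Quotient.mk_sub,
          Submodule.Quotient.mk_eq_zero] at e
        obtain ⟨x, hx⟩ := e
        refine ⟨b + w.map x, ?_⟩
        have : (Submodule.Quotient.mk (w.map x) : w.C ⧸ range w.map) = 0 := by
          rw [Submodule.Quotient.mk_eq_zero]; exact ⟨x, rfl⟩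
        simp [hh, hx, this]
      · rintro ⟨y, hy⟩
        have h1 : h y = a := congrArg Prod.fst hy
        have h2 : Submodule.mkQ (range w.map) y = Submodule.mkQ (range w.map) b :=
          congrArg Prod.snd hy
        rw [← h1, ← h2]
        simp)
    (by
      intro y
      obtain ⟨y, rfl⟩ := Submodule.mkQ_surjective _ y
      exact ⟨(y, 0), by simp⟩)
  rw [hχ.2.1 _ _ u.fp f1] at this
  omega

theorem val_mod {χ : Fn A} (hχ : IsSubadditive A χ) (hX : Module.FinitePresentation A X)
    (u w : UObj A X) : val χ (osup u w) + val χ (oinf hX u w) = val χ u + val χ w := by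
  have f1 := fp_coker hX w.fp w.map
  have f2 := fp_coker hX u.fp u.map
  have e1 : val χ (osup u w) = (χ (u.C × w.C) : ℤ) - χ ((u.C × w.C) ⧸ range (u.map.prod w.map)) := rfl
  have e2 : val χ (oinf hX u w) = (χ ((u.C × w.C) ⧸ range (u.map.prod w.map)) : ℤ)
    - χ ((u.C ⧸ range u.map) × (w.C ⧸ range w.map)) := by
    change (χ ((u.C × w.C) ⧸ range (u.map.prod w.map)) : ℤ) - χ _ = _
    rw [chi_surj hχ (Y := u.C × w.C) (fp_coker hX (oinf hX u w).fp (oinf hX u w).map)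
      (inferInstance : Module.FinitePresentation A ((u.C ⧸ range u.map) × (w.C ⧸ range w.map)))
      (Submodule.mkQ (range (oinf hX u w).map) ∘ₗ (Submodule.mkQ (range (u.map.prod w.map))))
      (LinearMap.prodMap (Submodule.mkQ _) (Submodule.mkQ _))]
    · exact (Submodule.mkQ_surjective _).comp (Submodule.mkQ_surjective _)
    · exact (Submodule.mkQ_surjective _).prodMap (Submodule.mkQ_surjective _)
    · rintro ⟨a, b⟩
      refine (Submodule.Quotient.mk_eq_zero (range (oinf hX u w).map)).trans ?_
      simp only [LinearMap.prodMap_apply, Submodule.mkQ_apply, Prod.mk_eq_zero,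
        Submodule.Quotient.mk_eq_zero]
      constructor
      · rintro ⟨x, hx⟩
        have hx' : (Submodule.Quotient.mk (u.map x, 0) : (u.C × w.C) ⧸ range (u.map.prod w.map))
          = Submodule.Quotient.mk (a, b) := hx
        rw [Submodule.Quotient.eq] at hx'
        obtain ⟨y, hy⟩ := hx'
        have h1 : u.map y = u.map x - a := congrArg Prod.fst hy
        have h2 : w.map y = 0 - b := congrArg Prod.snd hy
        refine ⟨⟨x - y, ?_⟩, ⟨-y, ?_⟩⟩
        · rw [map_sub, h1]; abel
        · rw [map_neg, h2]; abel
      · rintro ⟨⟨x, hx⟩, ⟨y, hy⟩⟩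
        refine ⟨x - y, ?_⟩
        change (Submodule.Quotient.mk (u.map (x - y), 0) : (u.C × w.C) ⧸ range (u.map.prod w.map))
          = Submodule.Quotient.mk (a, b)
        rw [Submodule.Quotient.eq]
        refine ⟨-y, ?_⟩
        simp [← hx, ← hy]
  rw [e1, e2, hχ.2.1 _ _ u.fp w.fp, hχ.2.1 _ _ f2 f1]
  unfold val
  push_cast; ring

theorem latOps {c d : Fn A} (hc : IsSubadditive A c) (hd : IsSubadditive A d)
    (hX : Module.FinitePresentation A X) :
    LatOps (osup (A := A) (X := X)) (oinf hX) (val c) (val d) where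
  le_sup_left a b := ⟨LinearMap.fst A _ _, fun _ => rfl⟩
  le_sup_right a b := ⟨LinearMap.snd A _ _, fun _ => rfl⟩
  sup_le := by
    rintro a b c ⟨h, hh⟩ ⟨k, hk⟩
    exact ⟨h.prod k, fun x => Prod.ext (hh x) (hk x)⟩
  inf_le_left a b := ⟨Submodule.mkQ _ ∘ₗ LinearMap.inl A _ _, fun x => rfl⟩
  inf_le_right a b := ⟨-(Submodule.mkQ _ ∘ₗ LinearMap.inr A _ _), fun x => by
    change -(Submodule.Quotient.mk (0, b.map x)) = (Submodule.Quotient.mk (a.map x, 0) : (a.C × b.C) ⧸ range (a.map.prod b.map))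
    rw [← Submodule.Quotient.mk_neg, Submodule.Quotient.eq]
    exact ⟨-x, by simp⟩⟩
  le_inf := by
    rintro a b c ⟨h, hh⟩ ⟨k, hk⟩
    refine ⟨Submodule.liftQ _ (h ∘ₗ LinearMap.fst A _ _ - k ∘ₗ LinearMap.snd A _ _) ?_, ?_⟩
    · rintro _ ⟨x, rfl⟩
      simp [hh, hk]
    · intro x
      change h (a.map x) - k 0 = _
      simp [hh]
  mv := val_mono hc hX
  mw := val_mono hd hX
  modv := val_mod hc hX
  modw := val_mod hd hX

theorem val_bot {c : Fn A} (hc : IsSubadditive A c) : val c (obot : UObj A X) = 0 := by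
  unfold val
  have : Subsingleton (obot : UObj A X).C := inferInstanceAs (Subsingleton PUnit)
  rw [chi_sub hc, chi_sub hc]; simp

theorem val_top {c : Fn A} (hc : IsSubadditive A c) (hX : Module.FinitePresentation A X) :
    val c (otop hX : UObj A X) = c X := by
  rw [val_eq hc hX (otop hX) (Z := PUnit) inferInstance 0 (fun _ => ⟨0, rfl⟩)
    (fun c => ⟨fun _ => ⟨c, rfl⟩, fun _ => rfl⟩), chi_sub hc (Z := PUnit)]
  simp only [Nat.cast_zero, sub_zero]
  rfl

/-- factor through a surjection -/
theorem factor {X Y Z W : Type} [AddCommGroup X] [Module A X] [AddCommGroup Y] [Module A Y]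
    [AddCommGroup Z] [Module A Z] [AddCommGroup W] [Module A W]
    {f : X →ₗ[A] Y} {g : Y →ₗ[A] Z} (he : Function.Exact f g) (hs : Function.Surjective g)
    (h : Y →ₗ[A] W) (hh : ∀ x, h (f x) = 0) : ∃ t : Z →ₗ[A] W, ∀ y, t (g y) = h y := by
  have hk : ker g ≤ ker h := by
    intro y hy
    obtain ⟨x, rfl⟩ := (he y).1 hy
    exact hh x
  refine ⟨Submodule.liftQ _ h hk ∘ₗ (g.quotKerEquivOfSurjective hs).symm.toLinearMap, fun y => ?_⟩
  have : (g.quotKerEquivOfSurjective hs).symm (g y) = Submodule.Quotient.mk y := by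
    rw [LinearEquiv.symm_apply_eq]; rfl
  simp [this]

end Mod
end SA
namespace SA
section Key
open LinearMap
variable {A : Type} [Ring A]
variable {X Y Z : Type} [AddCommGroup X] [Module A X] [AddCommGroup Y] [Module A Y]
  [AddCommGroup Z] [Module A Z]

/-- T1 -/
def pre (f : X →ₗ[A] Y) (u : UObj A Y) : UObj A X := ⟨u.C, u.fp, u.map ∘ₗ f⟩

theorem pre_mono (f : X →ₗ[A] Y) {u w : UObj A Y} (h : u ≤ w) : pre f u ≤ pre f w := by
  obtain ⟨k, hk⟩ := h
  exact ⟨k, fun x => hk (f x)⟩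

theorem val_pre_surj {c : Fn A} (hc : IsSubadditive A c) (hY : Module.FinitePresentation A Y)
    (hZ : Module.FinitePresentation A Z)
    (g : Y →ₗ[A] Z) (hg : Function.Surjective g) (u : UObj A Z) : val c (pre g u) = val c u := by
  rw [val_eq hc hY (pre g u) (fp_coker hZ u.fp u.map) (Submodule.mkQ (range u.map) :)
    (Submodule.mkQ_surjective (range u.map) :)]
  · rfl
  · intro y
    refine (Submodule.Quotient.mk_eq_zero (range u.map)).trans ?_
    constructor
    · rintro ⟨z, rfl⟩
      obtain ⟨y, rfl⟩ := hg z
      exact ⟨y, rfl⟩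
    · rintro ⟨y, rfl⟩
      exact ⟨g y, rfl⟩

def obj (hY : Module.FinitePresentation A Y) (f : X →ₗ[A] Y) : UObj A X := ⟨Y, hY, f⟩

open Classical in
noncomputable def unpre (hZ : Module.FinitePresentation A Z) (g : Y →ₗ[A] Z) (u : UObj A Y) :
    UObj A Z :=
  if h : u ≤ obj hZ g then ⟨u.C, u.fp, (le_iff.1 h).choose⟩ else obot

theorem unpre_spec (hZ : Module.FinitePresentation A Z) (g : Y →ₗ[A] Z) (u : UObj A Y)
    (h : u ≤ obj hZ g) : ∃ t : Z →ₗ[A] u.C, (∀ y, t (g y) = u.map y) ∧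
      unpre hZ g u = ⟨u.C, u.fp, t⟩ :=
  ⟨(le_iff.1 h).choose, (le_iff.1 h).choose_spec, by simp [unpre, h]⟩

theorem unpre_pre (hZ : Module.FinitePresentation A Z) (g : Y →ₗ[A] Z) (u : UObj A Y)
    (h : u ≤ obj hZ g) : pre g (unpre hZ g u) = u := by
  obtain ⟨t, ht, e⟩ := unpre_spec hZ g u h
  rw [e]
  have : t ∘ₗ g = u.map := LinearMap.ext ht
  cases u
  simp only [pre]
  congr

theorem le_of_pre {g : Y →ₗ[A] Z} (hg : Function.Surjective g) {u w : UObj A Z}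
    (h : pre g u ≤ pre g w) : u ≤ w := by
  obtain ⟨k, hk⟩ := h
  refine ⟨k, fun z => ?_⟩
  obtain ⟨y, rfl⟩ := hg z
  exact hk y

theorem key1 {c d : Fn A} (hc : IsSubadditive A c) (hd : IsSubadditive A d)
    (hY : Module.FinitePresentation A Y) (hZ : Module.FinitePresentation A Z)
    (g : Y →ₗ[A] Z) (hg : Function.Surjective g) :
    mm (val c) (val d) obot (obj hZ g) = mm (val c) (val d) obot (otop hZ) := by
  apply le_antisymm
  · apply mm_le
    refine (Reach.map (pre g) obot (otop hZ) (v' := val c) (w' := val d) ?_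
      (reach_mm (v := val c) (w := val d) (obot_le (otop hZ))) le_rfl le_rfl).congr
      (val_mono hc hY) (b' := obj hZ g) (a' := obot) ?_ (obot_le _) ?_ ?_
    · intro x y _ h _
      simp only [val_pre_surj hc hY hZ g hg, val_pre_surj hd hY hZ g hg]
      exact ⟨pre_mono g h, le_rfl, le_rfl⟩
    · exact ⟨0, fun _ => rfl⟩
    · exact ⟨LinearMap.id, fun _ => rfl⟩
    · exact ⟨LinearMap.id, fun _ => rfl⟩
  · apply mm_le
    refine (Reach.map (unpre hZ g) obot (obj hZ g) (v' := val c) (w' := val d) ?_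
      (reach_mm (v := val c) (w := val d) (obot_le (obj hZ g))) le_rfl le_rfl).congr
      (val_mono hc hZ) (b' := otop hZ) (a' := obot) ?_ (obot_le _) (le_otop _ _) ?_
    · intro x y _ h h2
      rw [← val_pre_surj hc hY hZ g hg, ← val_pre_surj hd hY hZ g hg,
        ← val_pre_surj hc hY hZ g hg, ← val_pre_surj hd hY hZ g hg,
        unpre_pre hZ g _ h2, unpre_pre hZ g _ (h.trans h2)]
      refine ⟨le_of_pre hg ?_, le_rfl, le_rfl⟩
      rwa [unpre_pre hZ g _ h2, unpre_pre hZ g _ (h.trans h2)]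
    · apply le_of_pre hg
      rw [unpre_pre hZ g _ (obot_le _)]
      exact ⟨0, fun _ => rfl⟩
    · apply le_of_pre hg
      rw [unpre_pre hZ g _ le_rfl]
      exact ⟨LinearMap.id, fun _ => rfl⟩

theorem val_pre {c : Fn A} (hc : IsSubadditive A c) (hX : Module.FinitePresentation A X)
    (hY : Module.FinitePresentation A Y)
    (hZ : Module.FinitePresentation A Z)
    (f : X →ₗ[A] Y) (g : Y →ₗ[A] Z) (he : Function.Exact f g) (hg : Function.Surjective g)
    (u : UObj A Y) (hu : obj hZ g ≤ u) : val c u = val c (pre f u) + c Z := by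
  obtain ⟨k, hk⟩ : ∃ k : u.C →ₗ[A] Z, ∀ x, k (u.map x) = g x := hu
  have f1 := fp_coker hY u.fp u.map
  have hgf : ∀ x, g (f x) = 0 := fun x => (he _).2 ⟨x, rfl⟩
  rw [val_eq hc hX (pre f u) (Z := Z × (u.C ⧸ range u.map)) inferInstance
    (LinearMap.prod k (Submodule.mkQ (range u.map)))]
  · rw [hc.2.1 _ _ hZ f1]
    unfold val
    change _ = (c u.C : ℤ) - _ + _
    push_cast; ring
  · rintro ⟨z, q⟩
    obtain ⟨q, rfl⟩ := Submodule.mkQ_surjective _ q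
    obtain ⟨y, hy⟩ := hg (z - k q)
    refine ⟨q + u.map y, Prod.ext ?_ ?_⟩
    · change k (q + u.map y) = z
      rw [map_add, hk, hy]; abel
    · change Submodule.mkQ (range u.map) (q + u.map y) = Submodule.mkQ (range u.map) q
      rw [map_add, add_eq_left]
      exact (Submodule.Quotient.mk_eq_zero _).2 ⟨y, rfl⟩
  · intro q
    constructor
    · intro h
      have h1 : k q = 0 := congrArg Prod.fst h
      have h2 : Submodule.Quotient.mk (p := range u.map) q = 0 := congrArg Prod.snd h
      obtain ⟨y, rfl⟩ := (Submodule.Quotient.mk_eq_zero _).1 h2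
      rw [hk] at h1
      obtain ⟨x, rfl⟩ := (he y).1 h1
      exact ⟨x, rfl⟩
    · rintro ⟨x, rfl⟩
      refine Prod.ext ?_ ?_
      · change k (u.map (f x)) = 0
        rw [hk, hgf]
      · exact (Submodule.Quotient.mk_eq_zero _).2 ⟨f x, rfl⟩

open Classical in
noncomputable def lft (hY : Module.FinitePresentation A Y) (hZ : Module.FinitePresentation A Z)
    (f : X →ₗ[A] Y) (g : Y →ₗ[A] Z) (u : UObj A X) : UObj A Y :=
  if h : u ≤ obj hY f then ⟨u.C × Z, inferInstance, (le_iff.1 h).choose.prod g⟩ else obot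

theorem lft_spec (hY : Module.FinitePresentation A Y) (hZ : Module.FinitePresentation A Z)
    (f : X →ₗ[A] Y) (g : Y →ₗ[A] Z) (u : UObj A X)
    (h : u ≤ obj hY f) : ∃ t : Y →ₗ[A] u.C, (∀ y, t (f y) = u.map y) ∧
      lft hY hZ f g u = ⟨u.C × Z, inferInstance, t.prod g⟩ :=
  ⟨(le_iff.1 h).choose, (le_iff.1 h).choose_spec, by unfold lft; exact dif_pos h⟩

theorem key2 {c d : Fn A} (hc : IsSubadditive A c) (hd : IsSubadditive A d)
    (hX : Module.FinitePresentation A X)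
    (hY : Module.FinitePresentation A Y) (hZ : Module.FinitePresentation A Z)
    (f : X →ₗ[A] Y) (g : Y →ₗ[A] Z) (he : Function.Exact f g) (hg : Function.Surjective g) :
    mm (val c) (val d) (obj hZ g) (otop hY) = mm (val c) (val d) obot (obj hY f) := by
  have hgf : ∀ x, g (f x) = 0 := fun x => (he _).2 ⟨x, rfl⟩
  apply le_antisymm
  · have hlow : ∀ x, x ≤ obj hY f → obj hZ g ≤ lft hY hZ f g x := by
      intro x hx
      obtain ⟨t, ht, e⟩ := lft_spec hY hZ f g x hx
      rw [e]
      exact ⟨(LinearMap.snd A x.C Z :), fun _ => rfl⟩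
    have hpre1 : ∀ x, x ≤ obj hY f → pre f (lft hY hZ f g x) ≤ x := by
      intro x hx
      obtain ⟨t, ht, e⟩ := lft_spec hY hZ f g x hx
      rw [e]
      exact ⟨(LinearMap.inl A x.C Z :), fun y => Prod.ext (ht y).symm (hgf y).symm⟩
    have hpre2 : ∀ x, x ≤ obj hY f → x ≤ pre f (lft hY hZ f g x) := by
      intro x hx
      obtain ⟨t, ht, e⟩ := lft_spec hY hZ f g x hx
      rw [e]
      exact ⟨(LinearMap.fst A x.C Z :), fun y => ht y⟩
    have hv : ∀ {c : Fn A}, IsSubadditive A c → ∀ x, x ≤ obj hY f →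
        val c (lft hY hZ f g x) = val c x + c Z := by
      intro c hc x hx
      rw [val_pre hc hX hY hZ f g he hg _ (hlow x hx),
        le_antisymm (val_mono hc hX (hpre1 x hx)) (val_mono hc hX (hpre2 x hx))]
    apply mm_le
    refine (Reach.map (lft hY hZ f g) obot (obj hY f) (v' := val c) (w' := val d) ?_
      (reach_mm (v := val c) (w := val d) (obot_le (obj hY f))) le_rfl le_rfl).congr
      (val_mono hc hY) (b' := otop hY) (a' := obj hZ g) ?_ (hlow _ (obot_le _)) (le_otop _ _) ?_
    · intro x y _ h h2
      rw [hv hc _ h2, hv hd _ h2, hv hc _ (h.trans h2), hv hd _ (h.trans h2)]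
      refine ⟨?_, by omega, by omega⟩
      obtain ⟨t, ht, e⟩ := lft_spec hY hZ f g x (h.trans h2)
      obtain ⟨t', ht', e'⟩ := lft_spec hY hZ f g y h2
      rw [e, e']
      obtain ⟨k, hk⟩ := h
      obtain ⟨r, hr⟩ := factor he hg (t - k ∘ₗ t') (fun a => by simp [ht, ht', hk])
      refine ⟨((k ∘ₗ LinearMap.fst A y.C Z + r ∘ₗ LinearMap.snd A y.C Z).prod (LinearMap.snd A y.C Z) :), ?_⟩
      intro a
      refine Prod.ext ?_ rfl
      change k (t' a) + r (g a) = t a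
      rw [hr]; simp
    · obtain ⟨t, ht, e⟩ := lft_spec hY hZ f g obot (obot_le _)
      rw [e]
      exact ⟨(LinearMap.inr A PUnit Z :), fun x => Prod.ext (Subsingleton.elim (α := PUnit) _ _) rfl⟩
    · obtain ⟨t, ht, e⟩ := lft_spec hY hZ f g (obj hY f) le_rfl
      rw [e]
      change Y →ₗ[A] Y at t
      replace ht : ∀ y, t (f y) = f y := ht
      obtain ⟨r, hr⟩ := factor he hg (LinearMap.id - t) (fun a => by simp [ht])
      refine ⟨(LinearMap.fst A Y Z + r ∘ₗ LinearMap.snd A Y Z :), fun y => ?_⟩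
      change t y + r (g y) = y
      rw [hr]; simp
  · apply mm_le
    refine (Reach.map (pre f) (obj hZ g) (otop hY) (v' := val c) (w' := val d) ?_
      (reach_mm (v := val c) (w := val d) (le_otop hY (obj hZ g))) le_rfl le_rfl).congr
      (val_mono hc hX) (b' := obj hY f) (a' := obot) ?_ (obot_le _) ?_ ?_
    · intro x y h1 h _
      rw [val_pre hc hX hY hZ f g he hg x h1, val_pre hd hX hY hZ f g he hg x h1,
        val_pre hc hX hY hZ f g he hg y (h1.trans h), val_pre hd hX hY hZ f g he hg y (h1.trans h)]
      exact ⟨pre_mono f h, by omega, by omega⟩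
    · exact ⟨0, fun x => (hgf x).symm⟩
    · exact ⟨LinearMap.id, fun _ => rfl⟩
    · exact ⟨LinearMap.id, fun _ => rfl⟩

open Classical in
noncomputable def meet (c d : Fn A) : Fn A := fun X _ _ =>
  if hX : Module.FinitePresentation A X then mm (val c) (val d) obot (otop hX) else 0

theorem meet_eq (c d : Fn A) (hX : Module.FinitePresentation A X) :
    meet c d X = mm (val c) (val d) obot (otop hX) := by simp [meet, hX]

theorem key {c d : Fn A} (hc : IsSubadditive A c) (hd : IsSubadditive A d)
    (hX : Module.FinitePresentation A X)
    (hY : Module.FinitePresentation A Y) (hZ : Module.FinitePresentation A Z)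
    (f : X →ₗ[A] Y) (g : Y →ₗ[A] Z) (he : Function.Exact f g) (hg : Function.Surjective g) :
    meet c d Y = meet c d Z + mm (val c) (val d) obot (obj hY f) := by
  rw [meet_eq c d hY, meet_eq c d hZ, mm_add (latOps hc hd hY) (obot_le (obj hZ g)) (le_otop hY _),
    key1 hc hd hY hZ g hg, key2 hc hd hX hY hZ f g he hg]

theorem meet_split {c d : Fn A} (hc : IsSubadditive A c) (hd : IsSubadditive A d)
    (hX : Module.FinitePresentation A X)
    (hY : Module.FinitePresentation A Y) (f : X →ₗ[A] Y) :
    meet c d X = mm (val c) (val d) obot (obj hY f) + mm (val c) (val d) (obj hY f) (otop hX) := by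
  rw [meet_eq c d hX, mm_add (latOps hc hd hX) (obot_le (obj hY f)) (le_otop hX _)]

theorem meet_iso {c d : Fn A} (hc : IsSubadditive A c) (hd : IsSubadditive A d)
    (hX : Module.FinitePresentation A X) (hY : Module.FinitePresentation A Y) (e : X ≃ₗ[A] Y) :
    meet c d X = meet c d Y := by
  rw [key hc hd (inferInstance : Module.FinitePresentation A PUnit) hX hY 0 e.toLinearMap ?_
    e.surjective]
  · have := mm_le_v (w := val d) (val_mono hc (X := PUnit) inferInstance)
      (obot_le (obj hX (0 : PUnit →ₗ[A] X)))
    have h2 := val_mono hc (X := PUnit) inferInstance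
      (show (obj hX (0 : PUnit →ₗ[A] X)) ≤ obot from ⟨0, fun _ => rfl⟩)
    omega
  · intro y
    constructor
    · intro h
      exact ⟨0, (e.map_eq_zero_iff.1 h).symm⟩
    · rintro ⟨_, rfl⟩
      simp

theorem meet_prod {c d : Fn A} (hc : IsSubadditive A c) (hd : IsSubadditive A d)
    (hX : Module.FinitePresentation A X) (hY : Module.FinitePresentation A Y) :
    meet c d (X × Y) = meet c d X + meet c d Y := by
  have hXY : Module.FinitePresentation A (X × Y) := inferInstance
  rw [key hc hd hX hXY hY (LinearMap.inl A X Y) (LinearMap.snd A X Y) ?_ Prod.snd_surjective,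
    meet_split hc hd hX hXY (LinearMap.inl A X Y)]
  · have := mm_le_v (w := val d) (val_mono hc hX) (le_otop hX (obj hXY (LinearMap.inl A X Y)))
    have h2 := val_mono hc hX
      (show otop hX ≤ (obj hXY (LinearMap.inl A X Y)) from ⟨LinearMap.fst A X Y, fun _ => rfl⟩)
    omega
  · rintro ⟨a, b⟩
    simp [eq_comm]

theorem val_obj {c : Fn A} (hc : IsSubadditive A c) (hX : Module.FinitePresentation A X)
    (hY : Module.FinitePresentation A Y) (hZ : Module.FinitePresentation A Z)
    (f : X →ₗ[A] Y) (g : Y →ₗ[A] Z) (he : Function.Exact f g) (hg : Function.Surjective g) :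
    val c (obj hY f) = c Y - c Z :=
  val_eq hc hX (obj hY f) hZ g hg he

theorem meet_sub {c d : Fn A} (hc : IsSubadditive A c) (hd : IsSubadditive A d) :
    IsSubadditive A (meet c d) := by
  refine ⟨?_, ?_, ?_⟩
  · intro X Y _ _ _ _ hX hY e
    exact meet_iso hc hd hX hY e
  · intro X Y _ _ _ _ hX hY
    exact meet_prod hc hd hX hY
  · intro X Y Z _ _ _ _ _ _ hX hY hZ f g he hg
    have := key hc hd hX hY hZ f g he hg
    have := meet_split hc hd hX hY f
    omega

theorem meet_le_left {c d : Fn A} (hc : IsSubadditive A c) (hX : Module.FinitePresentation A X) :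
    meet c d X ≤ c X := by
  have := mm_le_v (w := val d) (val_mono hc hX) (obot_le (otop hX))
  rw [val_bot hc, val_top hc, ← meet_eq] at this
  omega

theorem meet_le_right {c d : Fn A} (hd : IsSubadditive A d) (hX : Module.FinitePresentation A X) :
    meet c d X ≤ d X := by
  have := mm_le_w (v := val c) (val_mono hd hX) (obot_le (otop hX))
  rw [val_bot hd, val_top hd, ← meet_eq] at this
  omega

theorem diff_sub {e m : Fn A} (he : IsSubadditive A e) (hm : IsSubadditive A m)
    (hle : ∀ (X : Type) [AddCommGroup X] [Module A X], Module.FinitePresentation A X → m X ≤ e X)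
    (h : ∀ (X Y Z : Type) [AddCommGroup X] [Module A X] [AddCommGroup Y] [Module A Y]
      [AddCommGroup Z] [Module A Z],
      Module.FinitePresentation A X → Module.FinitePresentation A Y →
      Module.FinitePresentation A Z →
      ∀ (f : X →ₗ[A] Y) (g : Y →ₗ[A] Z),
      Function.Exact f g → Function.Surjective g → m X + m Z + e Y ≤ e X + e Z + m Y) :
    IsSubadditive A (fun X _ _ => e X - m X) := by
  refine ⟨?_, ?_, ?_⟩
  · intro X Y _ _ _ _ hX hY i
    simp only [he.1 X Y hX hY i, hm.1 X Y hX hY i]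
  · intro X Y _ _ _ _ hX hY
    have := hle X hX
    have := hle Y hY
    simp only [he.2.1 X Y hX hY, hm.2.1 X Y hX hY]
    omega
  · intro X Y Z _ _ _ _ _ _ hX hY hZ f g hh hg
    have := hle X hX
    have := hle Y hY
    have := hle Z hZ
    have := h X Y Z hX hY hZ f g hh hg
    simp only
    omega

theorem sub_meet_left {c d : Fn A} (hc : IsSubadditive A c) (hd : IsSubadditive A d) :
    IsSubadditive A (fun X _ _ => c X - meet c d X) := by
  refine diff_sub hc (meet_sub hc hd) (fun X _ _ hX => meet_le_left hc hX) ?_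
  intro X Y Z _ _ _ _ _ _ hX hY hZ f g he hg
  have := key hc hd hX hY hZ f g he hg
  have := meet_split hc hd hX hY f
  have := mm_le_v (w := val d) (val_mono hc hX) (le_otop hX (obj hY f))
  rw [val_top hc, val_obj hc hX hY hZ f g he hg] at this
  omega

theorem sub_meet_right {c d : Fn A} (hc : IsSubadditive A c) (hd : IsSubadditive A d) :
    IsSubadditive A (fun X _ _ => d X - meet c d X) := by
  refine diff_sub hd (meet_sub hc hd) (fun X _ _ hX => meet_le_right hd hX) ?_
  intro X Y Z _ _ _ _ _ _ hX hY hZ f g he hg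
  have := key hc hd hX hY hZ f g he hg
  have := meet_split hc hd hX hY f
  have := mm_le_w (v := val c) (val_mono hd hX) (le_otop hX (obj hY f))
  rw [val_top hd, val_obj hd hX hY hZ f g he hg] at this
  omega

/-- divisibility -/
def Dv (p a : Fn A) : Prop := ∃ x : Fn A, IsSubadditive A x ∧ FpEq A a (fun X _ _ => p X + x X)

theorem meet_dichotomy {p a : Fn A} (hp : IsIrreducibleSubadditive A p) (ha : IsSubadditive A a) :
    Dv p a ∨ FpEq A (meet p a) (fun _ _ _ => 0) := by
  by_cases h0 : FpNonzero A (meet p a)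
  · left
    by_cases h1 : FpNonzero A (fun X _ _ => p X - meet p a X)
    · exfalso
      refine hp.2.2 ⟨_, _, meet_sub hp.1 ha, sub_meet_left hp.1 ha, h0, h1, ?_⟩
      intro X _ _ hX
      have := meet_le_left (d := a) hp.1 hX
      simp only; omega
    · refine ⟨_, sub_meet_right hp.1 ha, ?_⟩
      intro X _ _ hX
      have h2 := meet_le_left (d := a) hp.1 hX
      have h3 := meet_le_right (c := p) ha hX
      have : p X - meet p a X = 0 := by
        by_contra h
        exact h1 ⟨X, _, _, hX, h⟩
      simp only; omega
  · right
    intro X _ _ hX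
    by_contra h
    exact h0 ⟨X, _, _, hX, h⟩

theorem val_add {a p x : Fn A} (hX : Module.FinitePresentation A X)
    (h : FpEq A a (fun X _ _ => p X + x X)) (u : UObj A X) : val a u = val p u + val x u := by
  unfold val
  rw [h _ u.fp, h _ (fp_coker hX u.fp u.map)]
  push_cast; ring

theorem prime {p a b x : Fn A} (hp : IsIrreducibleSubadditive A p) (ha : IsSubadditive A a)
    (hb : IsSubadditive A b) (hx : IsSubadditive A x)
    (h : FpEq A (fun X _ _ => a X + b X) (fun X _ _ => p X + x X)) : Dv p a ∨ Dv p b := by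
  rcases meet_dichotomy hp ha with h1 | h1
  · exact .inl h1
  rcases meet_dichotomy hp hb with h2 | h2
  · exact .inr h2
  exfalso
  obtain ⟨X, _, _, hX, hne⟩ := hp.2.1
  have := prime_aux (latOps hp.1 hb hX) (val_mono ha hX) ?_ (obot_le (otop hX))
  · rw [← meet_eq, ← meet_eq, h1 X hX, h2 X hX, val_top hp.1, val_bot hp.1] at this
    simp at this
    exact hne this
  · intro u w hu
    have e1 := fun u : UObj A X => val_add hX h u
    have e2 := fun u : UObj A X => val_add (a := fun X _ _ => a X + b X) (p := a) (x := b) hX (fun _ _ _ _ => rfl) u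
    have := val_mono hx hX hu
    have := e1 u
    have := e1 w
    have := e2 u
    have := e2 w
    omega

theorem sub_zero_fn : IsSubadditive A (fun _ _ _ => 0) :=
  ⟨fun _ _ _ _ _ _ _ _ _ => rfl, fun _ _ _ _ _ _ _ _ => rfl,
    fun _ _ _ _ _ _ _ _ _ _ _ _ _ _ _ _ => le_rfl⟩

theorem sub_add {a b : Fn A} (ha : IsSubadditive A a) (hb : IsSubadditive A b) :
    IsSubadditive A (fun X _ _ => a X + b X) := by
  refine ⟨?_, ?_, ?_⟩
  · intro X Y _ _ _ _ hX hY i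
    simp only [ha.1 X Y hX hY i, hb.1 X Y hX hY i]
  · intro X Y _ _ _ _ hX hY
    simp only [ha.2.1 X Y hX hY, hb.2.1 X Y hX hY]
    omega
  · intro X Y Z _ _ _ _ _ _ hX hY hZ f g hh hg
    have := ha.2.2 X Y Z hX hY hZ f g hh hg
    have := hb.2.2 X Y Z hX hY hZ f g hh hg
    simp only
    omega

theorem sub_sum {n : ℕ} (d : Fin n → Fn A) (hd : ∀ i, IsSubadditive A (d i)) :
    IsSubadditive A (fun X _ _ => ∑ i, d i X) := by
  induction n with
  | zero => simpa using sub_zero_fn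
  | succ n ih =>
    simp only [Fin.sum_univ_succ]
    exact sub_add (hd 0) (ih (fun i => d i.succ) (fun i => hd _))

theorem eq_of_dv {p a : Fn A} (hp : IsIrreducibleSubadditive A p)
    (ha : IsIrreducibleSubadditive A a) (h : Dv p a) : FpEq A p a := by
  obtain ⟨x, hx, e⟩ := h
  intro X _ _ hX
  rw [e X hX]
  have : x X = 0 := by
    by_contra h0
    exact ha.2.2 ⟨p, x, hp.1, hx, hp.2.1, ⟨X, _, _, hX, h0⟩, e⟩
  simp [this]

theorem exists_eq {m : ℕ} (d : Fin m → Fn A) (hd : ∀ i, IsIrreducibleSubadditive A (d i))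
    {p x : Fn A} (hp : IsIrreducibleSubadditive A p) (hx : IsSubadditive A x)
    (h : FpEq A (fun X _ _ => ∑ i, d i X) (fun X _ _ => p X + x X)) :
    ∃ j, FpEq A p (d j) := by
  induction m generalizing x with
  | zero =>
    exfalso
    obtain ⟨X, _, _, hX, hne⟩ := hp.2.1
    have := h X hX
    simp at this
    omega
  | succ n ih =>
    have h' : FpEq A (fun X _ _ => d 0 X + ∑ i : Fin n, d i.succ X) (fun X _ _ => p X + x X) := by
      intro X _ _ hX
      exact (Fin.sum_univ_succ _).symm.trans (h X hX)
    rcases prime (b := fun X _ _ => ∑ i : Fin n, d i.succ X) hp (hd 0).1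
      (sub_sum (fun i : Fin n => d i.succ) (fun i => (hd _).1)) hx h' with h1 | h1
    · exact ⟨0, eq_of_dv hp (hd 0) h1⟩
    · obtain ⟨y, hy, e⟩ := h1
      obtain ⟨j, hj⟩ := ih (fun i => d i.succ) (fun i => hd _) hy e
      exact ⟨j.succ, hj⟩

theorem uniq {n : ℕ} : ∀ {m : ℕ} (c : Fin n → Fn A) (d : Fin m → Fn A),
    (∀ i, IsIrreducibleSubadditive A (c i)) → (∀ j, IsIrreducibleSubadditive A (d j)) →
    FpEq A (fun X _ _ => ∑ i, c i X) (fun X _ _ => ∑ j, d j X) →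
    ∃ σ : Fin n ≃ Fin m, ∀ i, FpEq A (c i) (d (σ i)) := by
  induction n with
  | zero =>
    intro m c d hc hd h
    rcases m with _ | m
    · exact ⟨Equiv.refl _, fun i => i.elim0⟩
    · exfalso
      obtain ⟨X, _, _, hX, hne⟩ := (hd 0).2.1
      have := h X hX
      simp only [Fin.sum_univ_succ, Finset.univ_eq_empty, Finset.sum_empty] at this
      omega
  | succ n ih =>
    intro m c d hc hd h
    obtain ⟨j, hj⟩ := exists_eq d hd (hc 0)
      (sub_sum (fun i : Fin n => c i.succ) (fun i => (hc _).1)) (by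
        intro X _ _ hX
        rw [← h X hX]
        simp only [Fin.sum_univ_succ])
    rcases m with _ | m
    · exact j.elim0
    obtain ⟨σ, hσ⟩ := ih (fun i => c i.succ) (fun i => d (j.succAbove i)) (fun i => hc _)
      (fun i => hd _) (by
        intro X _ _ hX
        have := h X hX
        simp only [Fin.sum_univ_succ (f := fun i => c i X),
          Fin.sum_univ_succAbove (fun i => d i X) j] at this
        have := hj X hX
        simp only; omega)
    refine ⟨(finSuccEquiv' 0).trans ((Equiv.optionCongr σ).trans (finSuccEquiv' j).symm), ?_⟩
    intro i
    refine Fin.cases ?_ (fun i => ?_) i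
    · simpa using hj
    · have e : (finSuccEquiv' (0 : Fin (n + 1))) i.succ = some i := by
        rw [← Fin.succAbove_zero, finSuccEquiv'_succAbove]
      simpa [e] using hσ i

theorem chi_zero {χ : Fn A} (hχ : IsSubadditive A χ) (h0 : χ A = 0)
    (hX : Module.FinitePresentation A X) : χ X = 0 := by
  have hn : ∀ n : ℕ, χ (Fin n → A) = 0 := by
    intro n
    induction n with
    | zero => exact chi_sub hχ
    | succ n ih =>
      rw [← hχ.1 (A × (Fin n → A)) _ inferInstance inferInstance
        (Fin.consLinearEquiv A (fun _ : Fin (n + 1) => A)), hχ.2.1 _ _ inferInstance inferInstance,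
        h0, ih]
  obtain ⟨n, f, hf⟩ := Module.Finite.exists_fin' A X
  have := hχ.2.2 (Fin n → A) X PUnit inferInstance hX inferInstance f 0
    (fun y => by simpa using hf y) (fun _ => ⟨0, rfl⟩)
  rw [hn, chi_sub hχ (Z := PUnit)] at this
  omega

theorem exist (N : ℕ) : ∀ χ : Fn A, IsSubadditive A χ → χ A ≤ N →
    ∃ (n : ℕ) (c : Fin n → Fn A), (∀ i, IsIrreducibleSubadditive A (c i)) ∧
      FpEq A χ (fun X _ _ => ∑ i, c i X) := by
  induction N with
  | zero =>
    intro χ hχ h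
    exact ⟨0, fun i => i.elim0, fun i => i.elim0, fun X _ _ hX => by
      simpa using chi_zero hχ (by omega) hX⟩
  | succ N ih =>
    intro χ hχ h
    by_cases hz : FpNonzero A χ
    · by_cases hi : IsIrreducibleSubadditive A χ
      · exact ⟨1, fun _ => χ, fun _ => hi, fun X _ _ _ => by simp⟩
      · have : ∃ χ₁ χ₂ : Fn A,
            IsSubadditive A χ₁ ∧ IsSubadditive A χ₂ ∧ FpNonzero A χ₁ ∧ FpNonzero A χ₂ ∧
            FpEq A χ (fun X _ _ => χ₁ X + χ₂ X) := by
          by_contra hcon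
          exact hi ⟨hχ, hz, hcon⟩
        obtain ⟨a, b, ha, hb, na, nb, e⟩ := this
        have pos : ∀ {a : Fn A}, IsSubadditive A a → FpNonzero A a → a A ≠ 0 := by
          intro a ha ⟨X, _, _, hX, hne⟩ h0
          exact hne (chi_zero ha h0 hX)
        have := pos ha na
        have := pos hb nb
        have := e A inferInstance
        simp only at this
        obtain ⟨n, c, hc, ec⟩ := ih a ha (by omega)
        obtain ⟨m, d, hd, ed⟩ := ih b hb (by omega)
        refine ⟨n + m, Fin.append c d, ?_, ?_⟩
        · intro i
          refine Fin.addCases (fun i => ?_) (fun i => ?_) i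
          · rw [Fin.append_left]; exact hc i
          · rw [Fin.append_right]; exact hd i
        · intro X _ _ hX
          have h1 := e X hX
          have h2 := ec X hX
          have h3 := ed X hX
          simp only at h1 h2 h3
          simp only [h1, h2, h3, Fin.sum_univ_add, Fin.append_left, Fin.append_right]
    · refine ⟨0, fun i => i.elim0, fun i => i.elim0, fun X _ _ hX => ?_⟩
      by_contra hh
      exact hz ⟨X, _, _, hX, by simpa using hh⟩

end Key
end SA

/-- If the finitely presented `A`-modules form an abelian category, then
every non-zero subadditive function is a finite sum of irreducible subadditive functions,
uniquely up to reordering. -/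
theorem statement17 (A : Type) [Ring A] (hA : FpAbelian A)
    (χ : (X : Type) → [AddCommGroup X] → [Module A X] → ℕ)
    (hχ : IsSubadditive A χ) (hne : FpNonzero A χ) :
    (∃ (n : ℕ) (_ : 0 < n) (c : Fin n → (X : Type) → [AddCommGroup X] → [Module A X] → ℕ),
      (∀ i, IsIrreducibleSubadditive A (c i)) ∧
      FpEq A χ (fun X _ _ => ∑ i, c i X)) ∧
    (∀ (n m : ℕ) (c : Fin n → (X : Type) → [AddCommGroup X] → [Module A X] → ℕ)
        (d : Fin m → (X : Type) → [AddCommGroup X] → [Module A X] → ℕ),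
      (∀ i, IsIrreducibleSubadditive A (c i)) →
      (∀ j, IsIrreducibleSubadditive A (d j)) →
      FpEq A χ (fun X _ _ => ∑ i, c i X) →
      FpEq A χ (fun X _ _ => ∑ j, d j X) →
      ∃ σ : Fin n ≃ Fin m, ∀ i, FpEq A (c i) (d (σ i))) := by
  refine ⟨?_, ?_⟩
  · obtain ⟨n, c, hc, e⟩ := SA.exist _ χ hχ le_rfl
    refine ⟨n, ?_, c, hc, e⟩
    rcases n with _ | n
    · exfalso
      obtain ⟨X, _, _, hX, hne⟩ := hne
      exact hne (by simpa using e X hX)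
    · omega
  · intro n m c d hc hd h1 h2
    exact SA.uniq c d hc hd (fun X _ _ hX => (h1 X hX).symm.trans (h2 X hX))
end

section
/- Let A be a ring such that the finitely presented right A-modules form an abelian category. Sending an indecomposable endofinite A-module M to χ_M induces a bijection between the isomorphism classes of indecomposable endofinite A-modules and the irreducible subadditive functions on the finitely presented A-modules: for M indecomposable endofinite, χ_M is irreducible; every irreducible subadditive function equals χ_M for some indecomposable endofinite M; and χ_M = χ_N for indecomposable endofinite M, N implies M ≅ N. -/
/-- An `A`-module is indecomposable if it is non-trivial and in any direct sum
decomposition one summand is trivial. -/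
def IsIndecomposableModule (A : Type) [Ring A] (M : Type) [AddCommGroup M] [Module A M] :
    Prop :=
  Nontrivial M ∧
  ∀ (N₁ N₂ : Type) (_ : AddCommGroup N₁) (_ : Module A N₁) (_ : AddCommGroup N₂)
    (_ : Module A N₂), (M ≃ₗ[A] N₁ × N₂) → (Subsingleton N₁ ∨ Subsingleton N₂)

namespace CB

section Pushout
variable {A : Type} [Ring A]
variable {X Y X' : Type} [AddCommGroup X] [Module A X] [AddCommGroup Y] [Module A Y]
  [AddCommGroup X'] [Module A X']

/-- The pushout of `f : X → Y` and `g : X → X'`. -/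
abbrev PO (g : X →ₗ[A] X') (f : X →ₗ[A] Y) : Type :=
  (X' × Y) ⧸ LinearMap.range (g.prod (-f))

/-- left leg -/
def pinl (g : X →ₗ[A] X') (f : X →ₗ[A] Y) : X' →ₗ[A] PO g f :=
  (Submodule.mkQ _).comp (LinearMap.inl A X' Y)

/-- right leg -/
def pinr (g : X →ₗ[A] X') (f : X →ₗ[A] Y) : Y →ₗ[A] PO g f :=
  (Submodule.mkQ _).comp (LinearMap.inr A X' Y)

theorem po_cond (g : X →ₗ[A] X') (f : X →ₗ[A] Y) (x : X) :
    pinl g f (g x) = pinr g f (f x) := by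
  simp only [pinl, pinr, LinearMap.comp_apply, LinearMap.inl_apply, LinearMap.inr_apply,
    Submodule.mkQ_apply]
  rw [Submodule.Quotient.eq]
  exact ⟨x, by simp⟩

theorem po_surj (g : X →ₗ[A] X') (f : X →ₗ[A] Y) (p : PO g f) :
    ∃ a b, p = pinl g f a + pinr g f b := by
  obtain ⟨⟨a, b⟩, rfl⟩ := Submodule.mkQ_surjective _ p
  refine ⟨a, b, ?_⟩
  simp only [pinl, pinr, LinearMap.comp_apply, LinearMap.inl_apply, LinearMap.inr_apply,
    ← map_add]
  simp

theorem po_eq_zero (g : X →ₗ[A] X') (f : X →ₗ[A] Y) {a : X'} {b : Y}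
    (h : pinl g f a + pinr g f b = 0) : ∃ x, g x = a ∧ - f x = b := by
  simp only [pinl, pinr, LinearMap.comp_apply, LinearMap.inl_apply, LinearMap.inr_apply,
    ← map_add] at h
  rw [Submodule.mkQ_apply, Submodule.Quotient.mk_eq_zero] at h
  obtain ⟨x, hx⟩ := h
  refine ⟨x, ?_⟩
  simpa using hx

/-- universal property -/
def pdesc (g : X →ₗ[A] X') (f : X →ₗ[A] Y) {W : Type} [AddCommGroup W] [Module A W]
    (u : X' →ₗ[A] W) (v : Y →ₗ[A] W) (h : ∀ x, u (g x) = v (f x)) : PO g f →ₗ[A] W :=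
  Submodule.liftQ _ (u.coprod v) (by
    rintro _ ⟨x, rfl⟩
    simp [h])

@[simp] theorem pdesc_inl (g : X →ₗ[A] X') (f : X →ₗ[A] Y) {W : Type} [AddCommGroup W]
    [Module A W] (u : X' →ₗ[A] W) (v : Y →ₗ[A] W) (h : ∀ x, u (g x) = v (f x)) (a : X') :
    pdesc g f u v h (pinl g f a) = u a := by
  simp [pdesc, pinl]

@[simp] theorem pdesc_inr (g : X →ₗ[A] X') (f : X →ₗ[A] Y) {W : Type} [AddCommGroup W]
    [Module A W] (u : X' →ₗ[A] W) (v : Y →ₗ[A] W) (h : ∀ x, u (g x) = v (f x)) (a : Y) :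
    pdesc g f u v h (pinr g f a) = v a := by
  simp [pdesc, pinr]

theorem fp_quot {Y : Type} [AddCommGroup Y] [Module A Y] [Module.FinitePresentation A Y]
    (N : Submodule A Y) (hN : N.FG) : Module.FinitePresentation A (Y ⧸ N) :=
  Module.finitePresentation_of_surjective N.mkQ N.mkQ_surjective (by simpa using hN)

instance fp_quot_range [Module.Finite A X] [Module.FinitePresentation A Y] (f : X →ₗ[A] Y) :
    Module.FinitePresentation A (Y ⧸ LinearMap.range f) :=
  fp_quot _ (Submodule.fg_range f)

end Pushout

/-- type of functions on modules -/
abbrev Fn (A : Type) [Ring A] := (X : Type) → [AddCommGroup X] → [Module A X] → ℕ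

section Chi
variable {A : Type} [Ring A] {χ : Fn A} (hχ : IsSubadditive A χ)
variable {X Y Z : Type} [AddCommGroup X] [Module A X] [AddCommGroup Y] [Module A Y]
  [AddCommGroup Z] [Module A Z]
  [Module.FinitePresentation A X] [Module.FinitePresentation A Y] [Module.FinitePresentation A Z]

include hχ

theorem chi_equiv (e : X ≃ₗ[A] Y) : χ X = χ Y := hχ.1 X Y ‹_› ‹_› e

theorem chi_prod (X Y : Type) [AddCommGroup X] [Module A X] [AddCommGroup Y] [Module A Y]
  [Module.FinitePresentation A X] [Module.FinitePresentation A Y] : χ (X × Y) = χ X + χ Y :=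
  hχ.2.1 X Y ‹_› ‹_›

theorem chi_re (f : X →ₗ[A] Y) (g : Y →ₗ[A] Z) (h : Function.Exact f g)
    (hg : Function.Surjective g) : χ Y ≤ χ X + χ Z := hχ.2.2 X Y Z ‹_› ‹_› ‹_› f g h hg

theorem chi_sub [Subsingleton X] : χ X = 0 := by
  have h1 := chi_prod hχ X X
  have e : (X × X) ≃ₗ[A] X := LinearEquiv.ofSubsingleton _ _
  have := chi_equiv hχ e
  omega

theorem chi_surj (g : Y →ₗ[A] Z) (hg : Function.Surjective g) : χ Z ≤ χ Y := by
  have h := chi_re hχ g (0 : Z →ₗ[A] PUnit) (by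
    intro z; simpa using hg z) (fun _ => ⟨0, rfl⟩)
  have := chi_sub hχ (X := PUnit)
  omega

theorem chi_coker (f : X →ₗ[A] Y) (g : Y →ₗ[A] Z) (h : Function.Exact f g)
    (hg : Function.Surjective g) : χ (Y ⧸ LinearMap.range f) = χ Z := by
  have e : (Y ⧸ LinearMap.range f) ≃ₗ[A] Z :=
    (Submodule.quotEquivOfEq _ _ (LinearMap.exact_iff.1 h).symm).trans
      (LinearMap.quotKerEquivOfSurjective g hg)
  exact chi_equiv hχ e

omit hχ in
/-- `λ(f) = 0` -/
def Sig (χ : Fn A) {X Y : Type} [AddCommGroup X] [Module A X] [AddCommGroup Y] [Module A Y]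
    (f : X →ₗ[A] Y) : Prop :=
  χ X + χ (Y ⧸ LinearMap.range f) = χ Y

theorem coker_le (f : X →ₗ[A] Y) : χ Y ≤ χ X + χ (Y ⧸ LinearMap.range f) :=
  chi_re hχ f (Submodule.mkQ _) (by
    intro y; simp) (Submodule.mkQ_surjective _)

theorem coker_le' (f : X →ₗ[A] Y) : χ (Y ⧸ LinearMap.range f) ≤ χ Y :=
  chi_surj hχ (Submodule.mkQ _) (Submodule.mkQ_surjective _)

theorem chi_po {X' : Type} [AddCommGroup X'] [Module A X'] [Module.FinitePresentation A X']
    (g : X →ₗ[A] X') (f : X →ₗ[A] Y) : χ X' + χ Y ≤ χ X + χ (PO g f) := by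
  rw [← chi_prod hχ]
  exact coker_le hχ _

theorem exact_po {X' : Type} [AddCommGroup X'] [Module A X'] 
    (g : X →ₗ[A] X') (f : X →ₗ[A] Y) :
    ∃ c : PO g f →ₗ[A] (Y ⧸ LinearMap.range f), Function.Exact (pinl g f) c ∧
      Function.Surjective c := by
  refine ⟨pdesc g f 0 (Submodule.mkQ _) (by
    intro x
    symm
    simp), ?_, ?_⟩
  · intro p
    constructor
    · intro h
      obtain ⟨a, b, rfl⟩ := po_surj g f p
      simp at h
      obtain ⟨x, rfl⟩ := h
      exact ⟨a + g x, by rw [map_add, po_cond]⟩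
    · rintro ⟨a, rfl⟩
      simp
  · intro z
    obtain ⟨y, rfl⟩ := Submodule.mkQ_surjective _ z
    exact ⟨pinr g f y, by simp⟩

theorem sig_po {X' : Type} [AddCommGroup X'] [Module A X'] [Module.FinitePresentation A X']
    (g : X →ₗ[A] X') (f : X →ₗ[A] Y) (hf : Sig χ f) : Sig χ (pinl g f) := by
  obtain ⟨c, hc, hc'⟩ := exact_po hχ g f
  have h1 := chi_coker hχ _ c hc hc'
  have h2 := chi_po hχ g f
  have h3 := coker_le hχ (pinl g f)
  unfold Sig at *
  omega

theorem sig_comp (f : X →ₗ[A] Y) (g : Y →ₗ[A] Z) (hf : Sig χ f) (hg : Sig χ g) :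
    Sig χ (g.comp f) := by
  have h3 := coker_le hχ (g.comp f)
  have h4 : χ (Z ⧸ LinearMap.range (g.comp f)) ≤
      χ (Y ⧸ LinearMap.range f) + χ (Z ⧸ LinearMap.range g) := by
    refine chi_re hχ (Submodule.mapQ _ _ g ?_) (Submodule.mapQ _ _ LinearMap.id ?_) ?_ ?_
    · rintro _ ⟨x, rfl⟩
      exact ⟨x, rfl⟩
    · rintro _ ⟨x, rfl⟩
      exact ⟨f x, rfl⟩
    · intro z
      obtain ⟨z, rfl⟩ := Submodule.mkQ_surjective _ z
      simp only [Submodule.mkQ_apply, Submodule.mapQ_apply, LinearMap.id_apply,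
        Submodule.Quotient.mk_eq_zero]
      constructor
      · rintro ⟨y, rfl⟩
        exact ⟨Submodule.Quotient.mk y, rfl⟩
      · rintro ⟨y, hy⟩
        obtain ⟨y, rfl⟩ := Submodule.mkQ_surjective _ y
        simp only [Submodule.mkQ_apply, Submodule.mapQ_apply] at hy
        rw [Submodule.Quotient.eq] at hy
        obtain ⟨x, hx⟩ := hy
        refine ⟨y - f x, ?_⟩
        simp at hx
        simp [hx]
    · intro z
      obtain ⟨z, rfl⟩ := Submodule.mkQ_surjective _ z
      exact ⟨Submodule.Quotient.mk z, rfl⟩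
  unfold Sig at *
  omega

theorem sig_id : Sig χ (LinearMap.id : X →ₗ[A] X) := by
  have : Subsingleton (X ⧸ LinearMap.range (LinearMap.id : X →ₗ[A] X)) := by
    rw [LinearMap.range_id]
    infer_instance
  have := chi_sub hχ (X := X ⧸ LinearMap.range (LinearMap.id : X →ₗ[A] X))
  unfold Sig
  omega

theorem sig_zero (h : Sig χ (0 : X →ₗ[A] Y)) : χ X = 0 := by
  have := chi_coker hχ (0 : X →ₗ[A] Y) (LinearMap.id : Y →ₗ[A] Y) (by
    intro y; simp [eq_comm]) (fun y => ⟨y, rfl⟩)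
  unfold Sig at h
  omega

theorem chi_pi {ι : Type} [Finite ι] (U V Z : ι → Type) [∀ i, AddCommGroup (V i)]
    [∀ i, Module A (V i)] [∀ i, Module.FinitePresentation A (V i)] [∀ i, AddCommGroup (U i)]
    [∀ i, Module A (U i)] [∀ i, Module.FinitePresentation A (U i)] [∀ i, AddCommGroup (Z i)]
    [∀ i, Module A (Z i)] [∀ i, Module.FinitePresentation A (Z i)]
    (h : ∀ i, χ (U i) + χ (Z i) = χ (V i)) :
    χ (∀ i, U i) + χ (∀ i, Z i) = χ (∀ i, V i) := by
  suffices H : ∀ (V : ι → Type) [∀ i, AddCommGroup (V i)]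
      [∀ i, Module A (V i)] [∀ i, Module.FinitePresentation A (V i)],
      χ (∀ i, V i) = ∑ᶠ i, χ (V i) by
    rw [H, H, H, ← finsum_add_distrib (Set.toFinite _) (Set.toFinite _)]
    exact finsum_congr h
  intro W _ _ _
  refine Finite.induction_empty_option (P := fun ι => ∀ (V : ι → Type) [∀ i, AddCommGroup (V i)]
    [∀ i, Module A (V i)] [∀ i, Module.FinitePresentation A (V i)], Finite ι → 
    χ (∀ i, V i) = ∑ᶠ i, χ (V i)) ?_ ?_ ?_ ι W inferInstance
  · intro α β e h V _ _ _ hβ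
    have := Finite.of_equiv _ e.symm
    rw [← finsum_comp_equiv e (f := fun i => χ (V i)), ← h (fun i => V (e i)) inferInstance]
    exact (chi_equiv hχ (LinearEquiv.piCongrLeft A V e)).symm
  · intro V _ _ _ _
    rw [finsum_of_isEmpty]
    exact chi_sub hχ
  · intro α _ h V _ _ _ _
    have e : (∀ i, V i) ≃ₗ[A] V none × (∀ i : α, V (some i)) := LinearEquiv.piOptionEquivProd A
    rw [chi_equiv hχ e, chi_prod hχ, h _ inferInstance, finsum_eq_sum_of_fintype,
      finsum_eq_sum_of_fintype, Fintype.sum_option]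

theorem sig_pi {ι : Type} [Finite ι] (U V : ι → Type) [∀ i, AddCommGroup (V i)]
    [∀ i, Module A (V i)] [∀ i, Module.FinitePresentation A (V i)] [∀ i, AddCommGroup (U i)]
    [∀ i, Module A (U i)] [∀ i, Module.FinitePresentation A (U i)] 
    (f : ∀ i, U i →ₗ[A] V i) (h : ∀ i, Sig χ (f i)) : Sig χ (LinearMap.piMap f) := by
  have h1 := chi_pi hχ U V (fun i => V i ⧸ LinearMap.range (f i)) h
  have h2 := chi_coker hχ (LinearMap.piMap f)
    (LinearMap.piMap (fun i => (LinearMap.range (f i)).mkQ)) (by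
      intro v
      constructor
      · intro h
        have : ∀ i, v i ∈ LinearMap.range (f i) := by
          intro i
          simpa using congrFun h i
        choose u hu using this
        exact ⟨u, funext hu⟩
      · rintro ⟨u, rfl⟩
        ext i
        simp) (by
      intro z
      choose v hv using fun i => Submodule.mkQ_surjective _ (z i)
      exact ⟨v, funext hv⟩)
  unfold Sig
  rw [h2]
  exact h1

end Chi
end CB

namespace CB

theorem exists_factor {A : Type} [Ring A] {F Z W : Type} [AddCommGroup F] [Module A F]
    [AddCommGroup Z] [Module A Z] [AddCommGroup W] [Module A W] (c : F →ₗ[A] Z)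
    (hc : Function.Surjective c) (h0 : F →ₗ[A] W) (hk : LinearMap.ker c ≤ LinearMap.ker h0) :
    ∃ h : Z →ₗ[A] W, ∀ a, h (c a) = h0 a := by
  refine ⟨(Submodule.liftQ _ h0 hk).comp
    (LinearMap.quotKerEquivOfSurjective c hc).symm.toLinearMap, ?_⟩
  intro a
  have : (LinearMap.quotKerEquivOfSurjective c hc).symm (c a) = Submodule.Quotient.mk a := by
    rw [LinearEquiv.symm_apply_eq]
    rfl
  simp [this]

/-- maps which are locally in `Sig` -/
def LocSig {A : Type} [Ring A] (χ : Fn A) {U V : Type} [AddCommGroup U] [Module A U]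
    [AddCommGroup V] [Module A V] (f : U →ₗ[A] V) : Prop :=
  ∀ F : Set U, F.Finite → ∃ (U₀ V₀ : Type) (_ : AddCommGroup U₀) (_ : Module A U₀)
    (_ : AddCommGroup V₀) (_ : Module A V₀) (_ : Module.FinitePresentation A U₀)
    (_ : Module.FinitePresentation A V₀) (f₀ : U₀ →ₗ[A] V₀) (ρU : U →ₗ[A] U₀)
    (ρV : V →ₗ[A] V₀) (ι : U₀ →ₗ[A] U), Sig χ f₀ ∧ (∀ u, ρV (f u) = f₀ (ρU u)) ∧
    ∀ w ∈ F, ι (ρU w) = w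

/-- ind-`Sig` maps -/
def QQ {A : Type} [Ring A] (χ : Fn A) {P P' : Type} [AddCommGroup P] [Module A P]
    [AddCommGroup P'] [Module A P'] (j : P →ₗ[A] P') : Prop :=
  ∀ (X Z : Type) [AddCommGroup X] [Module A X] [AddCommGroup Z] [Module A Z]
    [Module.FinitePresentation A X] [Module.FinitePresentation A Z]
    (k : X →ₗ[A] Z) (x : X →ₗ[A] P) (z : Z →ₗ[A] P'), (∀ ξ, j (x ξ) = z (k ξ)) →
    ∃ (X' Y' : Type) (_ : AddCommGroup X') (_ : Module A X')
    (_ : AddCommGroup Y') (_ : Module A Y') (_ : Module.FinitePresentation A X')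
    (_ : Module.FinitePresentation A Y') (a : X →ₗ[A] X') (x' : X' →ₗ[A] P) (s : X' →ₗ[A] Y')
    (h : Z →ₗ[A] Y'), (∀ ξ, x' (a ξ) = x ξ) ∧ Sig χ s ∧ ∀ ξ, h (k ξ) = s (a ξ)

section
variable {A : Type} [Ring A] {χ : Fn A} (hχ : IsSubadditive A χ)
include hχ

theorem QQ_id {P : Type} [AddCommGroup P] [Module A P] :
    QQ χ (LinearMap.id : P →ₗ[A] P) := by
  intro X Z _ _ _ _ _ _ k x z h
  exact ⟨Z, Z, _, _, _, _, inferInstance, inferInstance, k, z, LinearMap.id, LinearMap.id,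
    fun ξ => (h ξ).symm, sig_id hχ, fun _ => rfl⟩

theorem QQ_comp {P P' P'' : Type} [AddCommGroup P] [Module A P] [AddCommGroup P'] [Module A P']
    [AddCommGroup P''] [Module A P''] (j : P →ₗ[A] P') (j' : P' →ₗ[A] P'') (hj : QQ χ j)
    (hj' : QQ χ j') : QQ χ (j'.comp j) := by
  intro X Z _ _ _ _ _ _ k x z h
  obtain ⟨X', Y', _, _, _, _, _, _, a, x', s, g, h1, h2, h3⟩ := hj' X Z k (j.comp x) z h
  obtain ⟨X₂, Y₂, _, _, _, _, _, _, a₂, x₂, s₂, g₂, k1, k2, k3⟩ :=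
    hj X X' a x x' (fun ξ => (h1 ξ).symm)
  refine ⟨X₂, PO g₂ s, _, _, _, _, inferInstance, inferInstance, a₂, x₂,
    (pinl g₂ s).comp s₂, (pinr g₂ s).comp g, k1, sig_comp hχ _ _ k2 (sig_po hχ _ _ h2), ?_⟩
  intro ξ
  simp only [LinearMap.comp_apply]
  rw [h3, ← k3, po_cond]

theorem QQ_ne {X₀ P : Type} [AddCommGroup X₀] [Module A X₀] [Module.FinitePresentation A X₀]
    [AddCommGroup P] [Module A P] (j : X₀ →ₗ[A] P) (hj : QQ χ j) (h0 : χ X₀ ≠ 0) : j ≠ 0 := by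
  rintro rfl
  obtain ⟨X', Y', _, _, _, _, _, _, a, x', s, g, h1, h2, h3⟩ :=
    hj X₀ PUnit 0 LinearMap.id 0 (by intro; simp)
  apply h0
  have := sig_po hχ x' s h2
  have h5 : pinl x' s = 0 := by
    ext ξ
    have := h1 ξ
    rw [LinearMap.id_apply] at this
    rw [← this, po_cond, ← h3, LinearMap.zero_apply, map_zero, map_zero]
    simp
  rw [h5] at this
  exact sig_zero hχ this

theorem QQ_po {U V P : Type} [AddCommGroup U] [Module A U] [AddCommGroup V] [Module A V]
    [AddCommGroup P] [Module A P] (f : U →ₗ[A] V) (hf : LocSig χ f) (u : U →ₗ[A] P) :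
    QQ χ (pinl u f) := by
  intro X Z _ _ _ _ _ _ k x z hk
  obtain ⟨n, c, hc⟩ := Module.Finite.exists_fin' A Z
  obtain ⟨R, hR⟩ := Module.FinitePresentation.fg_ker c hc
  obtain ⟨G, hG⟩ := (Module.Finite.fg_top : (⊤ : Submodule A X).FG)
  obtain ⟨q, hq⟩ := Module.projective_lifting_property
    (LinearMap.range (u.prod (-f))).mkQ (z.comp c) (Submodule.mkQ_surjective _)
  have hq' : ∀ a, pinl u f (q a).1 + pinr u f (q a).2 = z (c a) := by
    intro a
    rw [← LinearMap.comp_apply z c, ← hq]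
    simp only [pinl, pinr, LinearMap.comp_apply, LinearMap.inl_apply, LinearMap.inr_apply,
      ← map_add]
    simp
  have hw : ∀ r, ∃ w, c r = 0 → u w = (q r).1 ∧ - f w = (q r).2 := by
    intro r
    by_cases hr : c r = 0
    · have := hq' r
      rw [hr, map_zero] at this
      obtain ⟨w, hw⟩ := po_eq_zero _ _ this
      exact ⟨w, fun _ => hw⟩
    · exact ⟨0, fun h => absurd h hr⟩
  choose w hw using hw
  have hv : ∀ ξ, ∃ e v, c e = k ξ ∧ u v = (q e).1 - x ξ ∧ - f v = (q e).2 := by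
    intro ξ
    obtain ⟨e, he⟩ := hc (k ξ)
    have := hq' e
    rw [he, ← hk] at this
    have h2 : pinl u f ((q e).1 - x ξ) + pinr u f (q e).2 = 0 := by
      rw [map_sub, sub_add_eq_add_sub, this, sub_self]
    obtain ⟨v, hv⟩ := po_eq_zero _ _ h2
    exact ⟨e, v, he, hv⟩
  choose e v hv1 hv2 hv3 using hv
  obtain ⟨U₀, V₀, _, _, _, _, _, _, f₀, ρU, ρV, ι, hs, hρ, hι⟩ :=
    hf (w '' R ∪ v '' G) ((R.finite_toSet.image _).union (G.finite_toSet.image _))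
  let b : (Fin n → A) → X × U₀ × (Fin n → A) := fun r => (0, - ρU (w r), r)
  let b' : X → X × U₀ × (Fin n → A) := fun ξ => (-ξ, - ρU (v ξ), e ξ)
  let N : Submodule A (X × U₀ × (Fin n → A)) := Submodule.span A (b '' R ∪ b' '' G)
  have hN : N.FG := Submodule.fg_span
    ((R.finite_toSet.image _).union (G.finite_toSet.image _))
  haveI : Module.FinitePresentation A ((X × U₀ × (Fin n → A)) ⧸ N) := fp_quot N hN
  let π : X × U₀ × (Fin n → A) →ₗ[A] P :=
    x.coprod ((u.comp ι).coprod ((LinearMap.fst A P V).comp q))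
  have hπ : N ≤ LinearMap.ker π := by
    refine Submodule.span_le.2 ?_
    rintro _ (⟨r, hr, rfl⟩ | ⟨ξ, hξ, rfl⟩)
    · have hcr : c r = 0 := by
        have : r ∈ LinearMap.ker c := hR ▸ Submodule.subset_span hr
        simpa using this
      have h1 := hι (w r) (Or.inl ⟨r, hr, rfl⟩)
      simp [π, b, h1, (hw r hcr).1]
    · have h1 := hι (v ξ) (Or.inr ⟨ξ, hξ, rfl⟩)
      simp [π, b', h1, hv2]
  let mk := N.mkQ
  let i1 : X →ₗ[A] _ := mk.comp (LinearMap.inl A X (U₀ × (Fin n → A)))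
  let i2 : U₀ →ₗ[A] _ := mk.comp ((LinearMap.inr A X (U₀ × (Fin n → A))).comp
    (LinearMap.inl A U₀ (Fin n → A)))
  let i3 : (Fin n → A) →ₗ[A] _ := mk.comp ((LinearMap.inr A X (U₀ × (Fin n → A))).comp
    (LinearMap.inr A U₀ (Fin n → A)))
  have hi : ∀ ξ u₀ a, i1 ξ + i2 u₀ + i3 a = mk (ξ, u₀, a) := by
    intro ξ u₀ a
    simp only [i1, i2, i3, LinearMap.comp_apply, ← map_add]
    simp
  have hb : ∀ r ∈ R, i3 r = i2 (ρU (w r)) := by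
    intro r hr
    have h1 : mk (b r) = 0 := by
      simp only [mk, Submodule.mkQ_apply, Submodule.Quotient.mk_eq_zero]
      exact Submodule.subset_span (Or.inl ⟨r, hr, rfl⟩)
    rw [← hi] at h1
    rw [map_zero, zero_add, map_neg, neg_add_eq_zero] at h1
    exact h1.symm
  have hb' : ∀ ξ ∈ G, i3 (e ξ) = i1 ξ + i2 (ρU (v ξ)) := by
    intro r hr
    have h1 : mk (b' r) = 0 := by
      simp only [mk, Submodule.mkQ_apply, Submodule.Quotient.mk_eq_zero]
      exact Submodule.subset_span (Or.inr ⟨r, hr, rfl⟩)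
    rw [← hi] at h1
    rw [map_neg, map_neg, ← neg_add, neg_add_eq_zero] at h1
    exact h1.symm
  let h0 : (Fin n → A) →ₗ[A] PO i2 f₀ :=
    (pinl i2 f₀).comp i3 + (pinr i2 f₀).comp (ρV.comp ((LinearMap.snd A P V).comp q))
  obtain ⟨h, hh⟩ := exists_factor c hc h0 (by
    rw [← hR]
    refine Submodule.span_le.2 ?_
    intro r hr
    have hcr : c r = 0 := by
      have : r ∈ LinearMap.ker c := hR ▸ Submodule.subset_span hr
      simpa using this
    simp only [h0, SetLike.mem_coe, LinearMap.mem_ker, LinearMap.add_apply, LinearMap.comp_apply,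
      LinearMap.snd_apply]
    rw [hb r hr, po_cond, ← (hw r hcr).2, map_neg, hρ, map_neg, add_neg_cancel])
  refine ⟨_, PO i2 f₀, _, _, _, _, inferInstance, inferInstance, i1, N.liftQ π hπ,
    pinl i2 f₀, h, ?_, sig_po hχ _ _ hs, ?_⟩
  · intro ξ
    simp [i1, mk, π]
  · have : h.comp k = (pinl i2 f₀).comp i1 := by
      refine LinearMap.ext_on (s := (G : Set X)) hG ?_
      intro ξ hξ
      simp only [LinearMap.comp_apply]
      rw [← hv1, hh]
      simp only [h0, LinearMap.add_apply, LinearMap.comp_apply, LinearMap.snd_apply]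
      rw [hb' ξ hξ, map_add, po_cond, ← hv3, map_neg, hρ, map_neg, add_neg_cancel_right]
    exact fun ξ => LinearMap.congr_fun this ξ

end
end CB

namespace CB

/-- extension property -/
def Inj {A : Type} [Ring A] (M : Type) [AddCommGroup M] [Module A M] {X Y : Type}
    [AddCommGroup X] [Module A X] [AddCommGroup Y] [Module A Y] (f : X →ₗ[A] Y) : Prop :=
  ∀ x : X →ₗ[A] M, ∃ y : Y →ₗ[A] M, y.comp f = x

section Limit
variable {A : Type} [Ring A] (P : ℕ → Type) [∀ n, AddCommGroup (P n)] [∀ n, Module A (P n)]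
  (j : ∀ n, P n →ₗ[A] P (n + 1))

/-- transition maps -/
def tr (n : ℕ) : ∀ k, P n →ₗ[A] P k
  | 0 => (LinearMap.proj 0).comp (LinearMap.single A P n)
  | k + 1 => (LinearMap.proj (k + 1)).comp (LinearMap.single A P n) + (j k).comp (tr n k)

theorem tr_lt (n k : ℕ) (h : k < n) : tr P j n k = 0 := by
  induction k with
  | zero =>
    ext x
    simp [tr, h.ne]
  | succ k ih =>
    rw [tr, ih (by omega)]
    ext x
    simp [h.ne]

theorem tr_self (n : ℕ) : tr P j n n = LinearMap.id := by
  cases n with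
  | zero =>
    ext x
    simp [tr]
  | succ k =>
    rw [tr, tr_lt _ _ _ _ (by omega)]
    ext x
    simp

theorem tr_succ (n k : ℕ) (h : n ≤ k) : tr P j n (k + 1) = (j k).comp (tr P j n k) := by
  rw [tr]
  ext x
  have : k + 1 ≠ n := by omega
  simp [this]

/-- eventually compatible sequences -/
def ES : Submodule A (∀ n, P n) where
  carrier := {s | ∃ N, ∀ n ≥ N, s (n + 1) = j n (s n)}
  add_mem' := by
    rintro a b ⟨N, h⟩ ⟨N', h'⟩
    refine ⟨max N N', fun n hn => ?_⟩
    simp [h n (le_trans (le_max_left _ _) hn), h' n (le_trans (le_max_right _ _) hn)]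
  zero_mem' := ⟨0, by simp⟩
  smul_mem' := by
    rintro c a ⟨N, h⟩
    refine ⟨N, fun n hn => ?_⟩
    simp [h n hn]

/-- eventually zero sequences -/
def EZ : Submodule A (ES P j) where
  carrier := {s | ∃ N, ∀ n ≥ N, s.1 n = 0}
  add_mem' := by
    rintro a b ⟨N, h⟩ ⟨N', h'⟩
    refine ⟨max N N', fun n hn => ?_⟩
    simp [h n (le_trans (le_max_left _ _) hn), h' n (le_trans (le_max_right _ _) hn)]
  zero_mem' := ⟨0, by simp⟩
  smul_mem' := by
    rintro c a ⟨N, h⟩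
    refine ⟨N, fun n hn => ?_⟩
    simp [h n hn]

/-- the limit -/
abbrev Lim := ES P j ⧸ EZ P j

/-- the maps into the limit -/
def inn (n : ℕ) : P n →ₗ[A] Lim P j :=
  (EZ P j).mkQ.comp (LinearMap.codRestrict (ES P j) (LinearMap.pi (tr P j n)) (by
    intro x
    refine ⟨n, fun k hk => ?_⟩
    simp [tr_succ P j n k hk]))

theorem inn_of (n : ℕ) (s : ES P j) (h : ∀ k ≥ n, s.1 (k + 1) = j k (s.1 k)) :
    inn P j n (s.1 n) = (EZ P j).mkQ s := by
  rw [inn, LinearMap.comp_apply, Submodule.mkQ_apply, Submodule.mkQ_apply,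
    Submodule.Quotient.eq]
  refine ⟨n, fun k hk => ?_⟩
  change tr P j n k (s.1 n) - s.1 k = 0
  rw [sub_eq_zero]
  induction k, hk using Nat.le_induction with
  | base => simp [tr_self]
  | succ k hk ih => rw [tr_succ _ _ _ _ hk, h k hk, LinearMap.comp_apply, ih]

theorem inn_tr (n k : ℕ) (hk : n ≤ k) (x : P n) : inn P j k (tr P j n k x) = inn P j n x := by
  refine inn_of P j k ⟨LinearMap.pi (tr P j n) x, _⟩ ?_
  intro l hl
  simp [tr_succ P j n l (hk.trans hl)]

theorem inn_succ (n : ℕ) (x : P n) : inn P j (n + 1) (j n x) = inn P j n x := by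
  rw [← inn_tr P j n (n + 1) (by omega), tr_succ _ _ _ _ le_rfl, tr_self]
  rfl

theorem inn_zero (n : ℕ) (x : P n) (h : inn P j n x = 0) :
    ∃ N, ∀ k ≥ N, tr P j n k x = 0 := by
  rw [inn, LinearMap.comp_apply, Submodule.mkQ_apply, Submodule.Quotient.mk_eq_zero] at h
  exact h

theorem inn_surj (m : Lim P j) : ∃ N, ∀ n ≥ N, ∃ x, inn P j n x = m := by
  obtain ⟨s, rfl⟩ := Submodule.mkQ_surjective _ m
  obtain ⟨N, hN⟩ := s.2
  exact ⟨N, fun n hn => ⟨s.1 n, inn_of P j n s fun k hk => hN k (le_trans hn hk)⟩⟩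

theorem unif {α : Type} (S : Set α) (hS : S.Finite) (p : α → ℕ → Prop)
    (h : ∀ a ∈ S, ∃ N, ∀ k ≥ N, p a k) : ∃ N, ∀ k ≥ N, ∀ a ∈ S, p a k := by
  have : ∀ᶠ k in Filter.atTop, ∀ a ∈ S, p a k := by
    rw [Filter.eventually_all_finite hS]
    intro a ha
    exact Filter.eventually_atTop.2 (h a ha)
  exact Filter.eventually_atTop.1 this

theorem lim_lift {X : Type} [AddCommGroup X] [Module A X] [Module.FinitePresentation A X]
    (x : X →ₗ[A] Lim P j) : ∃ k, ∃ x' : X →ₗ[A] P k, ∀ ξ, inn P j k (x' ξ) = x ξ := by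
  obtain ⟨m, c, hc⟩ := Module.Finite.exists_fin' A X
  obtain ⟨R, hR⟩ := Module.FinitePresentation.fg_ker c hc
  obtain ⟨n, hn⟩ := unif (Set.univ : Set (Fin m)) Set.finite_univ
    (fun i n => ∃ p, inn P j n p = x (c (Pi.single i 1))) (fun i _ => inn_surj P j _)
  choose p hp using fun i => hn n le_rfl i trivial
  let g : (Fin m → A) →ₗ[A] P n := (Pi.basisFun A (Fin m)).constr ℕ p
  have hg : (inn P j n).comp g = x.comp c := by
    apply (Pi.basisFun A (Fin m)).ext
    intro i
    simp only [LinearMap.comp_apply, g, Module.Basis.constr_basis, hp]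
    simp
  obtain ⟨N, hN⟩ := unif (R : Set (Fin m → A)) R.finite_toSet
    (fun r k => tr P j n k (g r) = 0) (by
      intro r hr
      apply inn_zero
      have : r ∈ LinearMap.ker c := hR ▸ Submodule.subset_span hr
      rw [← LinearMap.comp_apply, hg, LinearMap.comp_apply, LinearMap.mem_ker.1 this, map_zero])
  obtain ⟨x', hx'⟩ := exists_factor c hc ((tr P j n (max N n)).comp g) (by
    rw [← hR]
    refine Submodule.span_le.2 ?_
    intro r hr
    simpa using hN (max N n) (le_max_left _ _) r hr)
  refine ⟨_, x', fun ξ => ?_⟩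
  obtain ⟨a, rfl⟩ := hc ξ
  rw [hx', LinearMap.comp_apply, inn_tr _ _ _ _ (le_max_right _ _), ← LinearMap.comp_apply, hg]
  rfl

theorem lim_zero {X : Type} [AddCommGroup X] [Module A X] [Module.Finite A X] (n : ℕ)
    (x : X →ₗ[A] P n) (h : ∀ ξ, inn P j n (x ξ) = 0) :
    ∃ N, ∀ k ≥ N, (tr P j n k).comp x = 0 := by
  obtain ⟨G, hG⟩ := (Module.Finite.fg_top : (⊤ : Submodule A X).FG)
  obtain ⟨N, hN⟩ := unif (G : Set X) G.finite_toSet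
    (fun r k => tr P j n k (x r) = 0) (fun r _ => inn_zero _ _ _ _ (h r))
  refine ⟨N, fun k hk => LinearMap.ext_on (s := (G : Set X)) hG ?_⟩
  intro r hr
  exact hN k hk r hr

end Limit

section Step
variable {A : Type} [Ring A]

/-- codes for f.p. modules -/
abbrev Cd (A : Type) [Ring A] := Σ n : ℕ, Finset (Fin n → A)

/-- the module of a code -/
abbrev Cm (c : Cd A) : Type := (Fin c.1 → A) ⧸ Submodule.span A (c.2 : Set (Fin c.1 → A))

instance (c : Cd A) : Module.FinitePresentation A (Cm c) :=
  fp_quot _ ⟨c.2, rfl⟩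

theorem exists_code (X : Type) [AddCommGroup X] [Module A X] [Module.FinitePresentation A X] :
    ∃ c : Cd A, Nonempty (X ≃ₗ[A] Cm c) := by
  obtain ⟨m, c, hc⟩ := Module.Finite.exists_fin' A X
  obtain ⟨R, hR⟩ := Module.FinitePresentation.fg_ker c hc
  exact ⟨⟨m, R⟩, ⟨((Submodule.quotEquivOfEq _ _ hR).trans
      (LinearMap.quotKerEquivOfSurjective c hc)).symm⟩⟩

variable {χ : Fn A} (hχ : IsSubadditive A χ)
include hχ

theorem sig_equiv {X Y : Type} [AddCommGroup X] [Module A X] [AddCommGroup Y] [Module A Y]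
    [Module.FinitePresentation A X] [Module.FinitePresentation A Y] (e : X ≃ₗ[A] Y) :
    Sig χ e.toLinearMap := by
  have : Subsingleton (Y ⧸ LinearMap.range e.toLinearMap) := by
    rw [LinearEquiv.range]
    infer_instance
  have h1 := chi_sub hχ (X := Y ⧸ LinearMap.range e.toLinearMap)
  have h2 := chi_equiv hχ e
  unfold Sig
  omega

omit hχ in
/-- tasks -/
structure Tk (χ : Fn A) (P : Type) [AddCommGroup P] [Module A P] where
  c : Cd A
  d : Cd A
  f : Cm c →ₗ[A] Cm d
  hf : Sig χ f
  x : Cm c →ₗ[A] P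

theorem locsig_dfinsupp {T : Type} (U V : T → Type) [∀ t, AddCommGroup (U t)]
    [∀ t, Module A (U t)] [∀ t, AddCommGroup (V t)] [∀ t, Module A (V t)]
    [∀ t, Module.FinitePresentation A (U t)] [∀ t, Module.FinitePresentation A (V t)]
    (f : ∀ t, U t →ₗ[A] V t) (hf : ∀ t, Sig χ (f t)) :
    LocSig (U := Π₀ t, U t) (V := Π₀ t, V t) χ (DFinsupp.mapRange.linearMap f) := by
  classical
  intro F hF
  let S : Finset T := hF.toFinset.biUnion (fun w => w.support)
  refine ⟨∀ i : S, U i, ∀ i : S, V i, inferInstance, inferInstance, inferInstance,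
    inferInstance, inferInstance, inferInstance, LinearMap.piMap (fun i => f i.1),
    LinearMap.pi (fun i => DFinsupp.lapply i.1), LinearMap.pi (fun i => DFinsupp.lapply i.1),
    ∑ i : S, (DFinsupp.lsingle i.1).comp (LinearMap.proj i),
    sig_pi hχ _ _ _ (fun i => hf i.1), ?_, ?_⟩
  · intro v
    ext i
    rfl
  · intro w hw
    simp only [LinearMap.sum_apply, LinearMap.comp_apply, LinearMap.proj_apply,
      LinearMap.pi_apply, DFinsupp.lsingle_apply]
    change (∑ i : S, DFinsupp.single i.1 (w i.1)) = w
    rw [Finset.sum_coe_sort S (fun i => DFinsupp.single i (w i))]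
    ext1 i
    rw [DFinsupp.finsetSum_apply]
    by_cases hi : i ∈ S
    · rw [Finset.sum_eq_single i]
      · simp
      · intro b _ hb
        rw [DFinsupp.single_eq_of_ne hb.symm]
      · exact fun h => absurd hi h
    · have : w i = 0 := by
        by_contra h
        exact hi (Finset.mem_biUnion.2 ⟨w, by simpa using hw, by simpa using h⟩)
      rw [this]
      apply Finset.sum_eq_zero
      intro b hb
      rw [DFinsupp.single_eq_of_ne]
      rintro rfl
      exact hi hb

theorem step_gen {T : Type} (U V : T → Type) [∀ t, AddCommGroup (U t)]
    [∀ t, Module A (U t)] [∀ t, AddCommGroup (V t)] [∀ t, Module A (V t)]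
    [∀ t, Module.FinitePresentation A (U t)] [∀ t, Module.FinitePresentation A (V t)]
    (f : ∀ t, U t →ₗ[A] V t) (hf : ∀ t, Sig χ (f t)) 
    (P : Type) [AddCommGroup P] [Module A P] (x : ∀ t, U t →ₗ[A] P) :
    ∃ (P' : ModuleCat.{0} A) (j : P →ₗ[A] P'), QQ χ j ∧
    ∀ t, ∃ y : V t →ₗ[A] P', ∀ ξ, y (f t ξ) = j (x t ξ) := by
  classical
  obtain ⟨F, hF⟩ : ∃ F : (Π₀ t, U t) →ₗ[A] (Π₀ t, V t), F = DFinsupp.mapRange.linearMap f :=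
    ⟨_, rfl⟩
  obtain ⟨u, hu⟩ : ∃ u : (Π₀ t, U t) →ₗ[A] P, u = DFinsupp.lsum ℕ x := ⟨_, rfl⟩
  have hl : LocSig (U := Π₀ t, U t) (V := Π₀ t, V t) χ F := hF ▸ locsig_dfinsupp hχ U V f hf
  refine ⟨ModuleCat.of A (PO u F), pinl u F, QQ_po hχ F hl u, ?_⟩
  intro t
  refine ⟨(pinr u F).comp (DFinsupp.lsingle t), fun ξ => ?_⟩
  have h1 : u (DFinsupp.lsingle (R := A) t ξ) = x t ξ := by
    simp [hu]
  have h2 : F (DFinsupp.lsingle (R := A) t ξ) = DFinsupp.lsingle (R := A) t (f t ξ) := by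
    simp [hF]
  rw [← h1, po_cond, h2]
  rfl

theorem step (P : Type) [AddCommGroup P] [Module A P] :
    ∃ (P' : ModuleCat.{0} A) (j : P →ₗ[A] P'), QQ χ j ∧
    ∀ (X Y : Type) [AddCommGroup X] [Module A X] [AddCommGroup Y] [Module A Y]
    [Module.FinitePresentation A X] [Module.FinitePresentation A Y] (f : X →ₗ[A] Y),
    Sig χ f → ∀ x : X →ₗ[A] P, ∃ y : Y →ₗ[A] P', ∀ ξ, y (f ξ) = j (x ξ) := by
  obtain ⟨P', j, h1, h2⟩ := step_gen hχ (T := Tk χ P) (fun t => Cm t.c) (fun t => Cm t.d)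
    (fun t => t.f) (fun t => t.hf) P (fun t => t.x)
  refine ⟨P', j, h1, ?_⟩
  intro X Y _ _ _ _ _ _ g hg x
  obtain ⟨c, ⟨e⟩⟩ := exists_code (A := A) X
  obtain ⟨d, ⟨e'⟩⟩ := exists_code (A := A) Y
  obtain ⟨y, hy⟩ := h2 ⟨c, d, e'.toLinearMap.comp (g.comp e.symm.toLinearMap),
    sig_comp hχ _ _ (sig_comp hχ _ _ (sig_equiv hχ _) hg) (sig_equiv hχ _),
    x.comp e.symm.toLinearMap⟩
  refine ⟨y.comp e'.toLinearMap, fun ξ => ?_⟩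
  simpa using hy (e ξ)

omit hχ in
/-- iteration -/
noncomputable def sq (nx : ModuleCat.{0} A → ModuleCat.{0} A) (X₀ : ModuleCat.{0} A) :
    ℕ → ModuleCat.{0} A
  | 0 => X₀
  | n + 1 => nx (sq nx X₀ n)

theorem exists_inj (X₀ : Type) [AddCommGroup X₀] [Module A X₀] [Module.FinitePresentation A X₀]
    (h0 : χ X₀ ≠ 0) : ∃ (M : Type) (_ : AddCommGroup M) (_ : Module A M), Nontrivial M ∧
    ∀ (X Y : Type) [AddCommGroup X] [Module A X] [AddCommGroup Y] [Module A Y]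
    [Module.FinitePresentation A X] [Module.FinitePresentation A Y] (f : X →ₗ[A] Y),
    Sig χ f → Inj M f := by
  choose nx jx hQ hx using fun P : ModuleCat.{0} A => step hχ P
  let P : ℕ → ModuleCat.{0} A := sq nx (ModuleCat.of A X₀)
  let j : ∀ n : ℕ, (P n) →ₗ[A] (P (n + 1)) := fun n => jx (P n)
  refine ⟨Lim (fun n => (P n : Type)) j, inferInstance, inferInstance, ?_, ?_⟩
  · by_contra hn
    rw [not_nontrivial_iff_subsingleton] at hn
    obtain ⟨N, hN⟩ := lim_zero (fun n => (P n : Type)) j 0 (LinearMap.id : X₀ →ₗ[A] X₀)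
      (fun ξ => Subsingleton.elim _ _)
    have hq : ∀ k, QQ χ (tr (fun n => (P n : Type)) j 0 k) := by
      intro k
      induction k with
      | zero =>
        rw [tr_self]
        exact QQ_id hχ
      | succ k ih =>
        rw [tr_succ _ _ _ _ (Nat.zero_le _)]
        exact QQ_comp hχ _ _ ih (hQ _)
    refine QQ_ne hχ (X₀ := X₀) _ (hq N) h0 ?_
    exact hN N le_rfl
  · intro X Y _ _ _ _ _ _ f hf x
    obtain ⟨k, x', hx'⟩ := lim_lift _ _ x
    obtain ⟨y, hy⟩ := hx (P k) X Y f hf x'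
    refine ⟨(inn (fun n => (P n : Type)) j (k + 1)).comp y, ?_⟩
    ext ξ
    change inn (fun n => (P n : Type)) j (k + 1) (y (f ξ)) = _
    rw [← hx']
    refine (congrArg (inn (fun n => (P n : Type)) j (k + 1)) (hy ξ)).trans ?_
    exact inn_succ (fun n => (P n : Type)) j k _

end Step
end CB

namespace CB

/-- pointed f.p. modules -/
structure Pt (A : Type) [Ring A] where
  Y : Type
  [g : AddCommGroup Y]
  [m : Module A Y]
  [fp : Module.FinitePresentation A Y]
  η : Y

attribute [instance] Pt.g Pt.m Pt.fp

section PP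
variable {A : Type} [Ring A]
variable (N : Type) [AddCommGroup N] [Module A N]

/-- pp-definable subgroups -/
def pp (d : Pt A) : Submodule (Module.End A N) N where
  carrier := {n | ∃ y : d.Y →ₗ[A] N, y d.η = n}
  add_mem' := by
    rintro _ _ ⟨y, rfl⟩ ⟨y', rfl⟩
    exact ⟨y + y', rfl⟩
  zero_mem' := ⟨0, rfl⟩
  smul_mem' := by
    rintro e _ ⟨y, rfl⟩
    exact ⟨e.comp y, rfl⟩

theorem mem_pp {d : Pt A} {n : N} : n ∈ pp N d ↔ ∃ y : d.Y →ₗ[A] N, y d.η = n := Iff.rfl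

/-- descending chain condition -/
def PPDCC (A : Type) [Ring A] (N : Type) [AddCommGroup N] [Module A N] : Prop :=
  ∀ S : Set (Pt A), S.Nonempty → ∃ d ∈ S, ∀ d' ∈ S, pp N d' ≤ pp N d → pp N d' = pp N d

variable {N}
variable {M : Type} [AddCommGroup M] [Module A M]

/-- the extension condition -/
def Star (Γ : Submodule A (M × N)) : Prop :=
  ∀ (K Y : Type) [AddCommGroup K] [Module A K] [AddCommGroup Y] [Module A Y]
    [Module.FinitePresentation A K] [Module.FinitePresentation A Y]
    (k : K →ₗ[A] Y) (b : K →ₗ[A] N) (y : Y →ₗ[A] M), (∀ ξ, (y (k ξ), b ξ) ∈ Γ) →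
    ∃ y' : Y →ₗ[A] N, ∀ ξ, y' (k ξ) = b ξ

/-- it suffices to check free modules -/
theorem star_of_free (Γ : Submodule A (M × N))
    (h : ∀ (n : ℕ) (Y : Type) [AddCommGroup Y] [Module A Y] [Module.FinitePresentation A Y]
    (k : (Fin n → A) →ₗ[A] Y) (b : (Fin n → A) →ₗ[A] N) (y : Y →ₗ[A] M),
    (∀ ξ, (y (k ξ), b ξ) ∈ Γ) → ∃ y' : Y →ₗ[A] N, ∀ ξ, y' (k ξ) = b ξ) : Star Γ := by
  intro K Y _ _ _ _ _ _ k b y hy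
  obtain ⟨n, c, hc⟩ := Module.Finite.exists_fin' A K
  obtain ⟨y', hy'⟩ := h n Y (k.comp c) (b.comp c) y (fun ξ => hy _)
  refine ⟨y', fun ξ => ?_⟩
  obtain ⟨a, rfl⟩ := hc ξ
  exact hy' a

/-- data for one-point extensions -/
structure Dat (Γ : Submodule A (M × N)) (m : M) where
  K : Type
  Y : Type
  [i1 : AddCommGroup K]
  [i2 : Module A K]
  [i3 : AddCommGroup Y]
  [i4 : Module A Y]
  [i5 : Module.FinitePresentation A K]
  [i6 : Module.FinitePresentation A Y]
  k : K →ₗ[A] Y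
  b : K →ₗ[A] N
  y : Y →ₗ[A] M
  η : Y
  hy : ∀ ξ, (y (k ξ), b ξ) ∈ Γ
  hη : y η = m

attribute [instance] Dat.i1 Dat.i2 Dat.i3 Dat.i4 Dat.i5 Dat.i6

/-- the homogeneous problem -/
def Dat.pt {Γ : Submodule A (M × N)} {m : M} (d : Dat Γ m) : Pt A where
  Y := d.Y ⧸ LinearMap.range d.k
  η := Submodule.Quotient.mk d.η

theorem Dat.mem {Γ : Submodule A (M × N)} {m : M} (d : Dat Γ m) (n : N) :
    n ∈ pp N d.pt ↔ ∃ y : d.Y →ₗ[A] N, (∀ ξ, y (d.k ξ) = 0) ∧ y d.η = n := by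
  constructor
  · rintro ⟨y, hy⟩
    refine ⟨y.comp (Submodule.mkQ _), fun ξ => ?_, hy⟩
    have : (LinearMap.range d.k).mkQ (d.k ξ) = 0 := by simp
    exact (congrArg y this).trans (map_zero y)
  · rintro ⟨y, hy, h⟩
    exact ⟨(LinearMap.range d.k).liftQ y (by
      rintro _ ⟨ξ, rfl⟩
      exact hy ξ), h⟩

theorem star_ext_aux (hN : PPDCC A N) (Γ : Submodule A (M × N)) (hΓ : Star Γ) (m : M) :
    ∃ m' : N, ∀ d : Dat Γ m, ∃ y : d.Y →ₗ[A] N, (∀ ξ, y (d.k ξ) = d.b ξ) ∧ y d.η = m' := by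
  let d₀ : Dat Γ m :=
    { K := A, Y := A, k := 0, b := 0, y := LinearMap.toSpanSingleton A M m, η := 1
      hy := by
        intro ξ
        rw [LinearMap.zero_apply, LinearMap.zero_apply, map_zero]
        exact Γ.zero_mem
      hη := by simp }
  obtain ⟨_, ⟨d, rfl⟩, hmin⟩ := hN (Set.range (Dat.pt (Γ := Γ) (m := m))) ⟨_, d₀, rfl⟩
  obtain ⟨y, hy⟩ := hΓ d.K d.Y d.k d.b d.y d.hy
  refine ⟨y d.η, fun d₁ => ?_⟩
  let d' : Dat Γ m :=
    { K := (d.K × d₁.K) × A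
      Y := d.Y × d₁.Y
      k := ((d.k).prodMap d₁.k).coprod (LinearMap.toSpanSingleton A _ (d.η, - d₁.η))
      b := (d.b.coprod d₁.b).coprod 0
      y := d.y.coprod d₁.y
      η := (d.η, 0)
      hy := by
        rintro ⟨⟨ξ, ξ₁⟩, a⟩
        have := Γ.add_mem (d.hy ξ) (d₁.hy ξ₁)
        have e : d.y (d.k ξ) + a • m + (d₁.y (d₁.k ξ₁) + -(a • m)) =
          d.y (d.k ξ) + d₁.y (d₁.k ξ₁) := by abel
        simpa [d.hη, d₁.hη, e] using this
      hη := by simp [d.hη] }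
  have hle : ∀ n, n ∈ pp N d.pt → n ∈ pp N d'.pt := by
    have : pp N d'.pt = pp N d.pt := by
      apply hmin _ ⟨d', rfl⟩
      intro n hn
      rw [Dat.mem] at hn ⊢
      obtain ⟨w, hw, h⟩ := hn
      refine ⟨w.comp (LinearMap.inl A _ _), fun ξ => ?_, ?_⟩
      · have := hw ((ξ, 0), 0)
        simpa [d'] using this
      · simpa [d'] using h
    rw [this]
    exact fun _ h => h
  obtain ⟨w, hw⟩ : ∃ w : d.Y × d₁.Y →ₗ[A] N, ∀ ξ, w (d'.k ξ) = d'.b ξ := hΓ d'.K d'.Y d'.k d'.b d'.y d'.hy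
  have hw1 : ∀ ξ, w (d.k ξ, 0) = d.b ξ := fun ξ => by
    have := hw ((ξ, 0), 0)
    simpa [d'] using this
  have hw2 : ∀ ξ, w (0, d₁.k ξ) = d₁.b ξ := fun ξ => by
    have := hw ((0, ξ), 0)
    simpa [d'] using this
  have split : ∀ (w : d.Y × d₁.Y →ₗ[A] N), w (d.η, - d₁.η) = 0 → w (d.η, 0) = w (0, d₁.η) := by
    intro w h
    rw [← sub_eq_zero, ← map_sub]
    simpa using h
  have hw3 : w (d.η, 0) = w (0, d₁.η) := by
    apply split
    have := hw ((0, 0), 1)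
    simpa [d'] using this
  have h4 : y d.η - w (d.η, 0) ∈ pp N d'.pt := by
    apply hle
    rw [Dat.mem]
    refine ⟨y - w.comp (LinearMap.inl A _ _), fun ξ => ?_, ?_⟩
    · simp [hw1, hy]
    · simp
  rw [Dat.mem] at h4
  obtain ⟨v, hv, hv'⟩ : ∃ v : d.Y × d₁.Y →ₗ[A] N, (∀ ξ, v (d'.k ξ) = 0) ∧
    v (d.η, 0) = y d.η - w (d.η, 0) := h4
  have hv2 : ∀ ξ, v (0, d₁.k ξ) = 0 := fun ξ => by
    have := hv ((0, ξ), 0)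
    simpa [d'] using this
  have hv3 : v (d.η, 0) = v (0, d₁.η) := by
    apply split
    have := hv ((0, 0), 1)
    simpa [d'] using this
  refine ⟨(w + v).comp (LinearMap.inr A _ _), fun ξ => ?_, ?_⟩
  · simp [hw2, hv2]
  · have : v (d.η, 0) = y d.η - w (d.η, 0) := hv'
    simp only [LinearMap.comp_apply, LinearMap.inr_apply, LinearMap.add_apply, ← hw3, ← hv3, this]
    abel

theorem star_ext (hN : PPDCC A N) (Γ : Submodule A (M × N)) (hΓ : Star Γ) (m : M) :
    ∃ m' : N, Star (Γ ⊔ Submodule.span A {(m, m')}) := by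
  obtain ⟨m', hm'⟩ := star_ext_aux hN Γ hΓ m
  refine ⟨m', star_of_free _ ?_⟩
  intro n Y _ _ _ k b y h
  have : ∀ i : Fin n, ∃ α : A, (y (k (Pi.single i 1)) - α • m, b (Pi.single i 1) - α • m') ∈ Γ := by
    intro i
    obtain ⟨g, hg, z, hz, he⟩ := Submodule.mem_sup.1 (h (Pi.single i 1))
    obtain ⟨α, rfl⟩ := Submodule.mem_span_singleton.1 hz
    refine ⟨α, ?_⟩
    have : g = (y (k (Pi.single i 1)) - α • m, b (Pi.single i 1) - α • m') := by
      rw [eq_sub_of_add_eq he]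
      simp
    rwa [← this]
  choose α hα using this
  let a : (Fin n → A) →ₗ[A] A := (Pi.basisFun A (Fin n)).constr ℕ α
  let Φ : (Fin n → A) →ₗ[A] M × N :=
    (y.comp k - (LinearMap.toSpanSingleton A M m).comp a).prod
      (b - (LinearMap.toSpanSingleton A N m').comp a)
  have hΦ : ∀ ξ, Φ ξ ∈ Γ := by
    have : LinearMap.range Φ ≤ Γ := by
      rw [LinearMap.range_eq_map, ← (Pi.basisFun A (Fin n)).span_eq, Submodule.map_span,
        Submodule.span_le]
      rintro _ ⟨_, ⟨i, rfl⟩, rfl⟩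
      have h1 : a (Pi.single i 1) = α i := by
        rw [← Pi.basisFun_apply, Module.Basis.constr_basis]
      have := hα i
      simpa [Φ, h1] using this
    exact fun ξ => this ⟨ξ, rfl⟩
  obtain ⟨w, hw, hw'⟩ := hm'
    { K := Fin n → A
      Y := Y × A
      k := k.prod (-a)
      b := b - (LinearMap.toSpanSingleton A N m').comp a
      y := y.coprod (LinearMap.toSpanSingleton A M m)
      η := (0, 1)
      hy := by
        intro ξ
        have := hΦ ξ
        simpa [Φ, sub_eq_add_neg] using this
      hη := by simp }
  refine ⟨w.comp (LinearMap.inl A _ _), fun ξ => ?_⟩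
  have h1 := hw ξ
  have h2 : ((k.prod (-a)) ξ) = LinearMap.inl A Y A (k ξ) - (a ξ) • ((0, 1) : Y × A) := by
    simp
  change w ((k.prod (-a)) ξ) = _ at h1
  change w (0, 1) = _ at hw'
  rw [h2, map_sub, map_smul, hw'] at h1
  simpa using h1

theorem fg_directed {P : Type} [AddCommGroup P] [Module A P] (L : Submodule A P) (hL : L.FG)
    (c : Set (Submodule A P)) (hc : DirectedOn (· ≤ ·) c) (hne : c.Nonempty) (h : L ≤ sSup c) :
    ∃ Γ ∈ c, L ≤ Γ := by
  have := (Submodule.fg_iff_compact L).1 hL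
  exact (CompleteLattice.isCompactElement_iff_le_of_directed_sSup_le _ L).1 this c hne hc h

theorem star_graph (hN : PPDCC A N) (Γ : Submodule A (M × N)) (hΓ : Star Γ) :
    ∃ e : M →ₗ[A] N, ∀ p ∈ Γ, e p.1 = p.2 := by
  obtain ⟨Δ, hle, hΔ⟩ := zorn_le_nonempty₀ {Γ : Submodule A (M × N) | Star Γ} (by
    intro c hc hch Γ' hΓ'
    refine ⟨sSup c, ?_, fun z hz => le_sSup hz⟩
    intro K Y _ _ _ _ _ _ k b y h
    obtain ⟨Γ'', h1, h2⟩ := fg_directed (LinearMap.range ((y.comp k).prod b))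
      (Submodule.fg_range _) c hch.directedOn ⟨_, hΓ'⟩ (by
        rintro _ ⟨ξ, rfl⟩
        exact h ξ)
    exact hc h1 K Y k b y (fun ξ => h2 ⟨ξ, rfl⟩)) Γ hΓ
  have hs : Star Δ := hΔ.1
  have tot : ∀ m, ∃ n, (m, n) ∈ Δ := by
    intro m
    obtain ⟨m', hm'⟩ := star_ext hN Δ hs m
    exact ⟨m', hΔ.2 hm' le_sup_left (Submodule.mem_sup_right (Submodule.mem_span_singleton_self _))⟩
  have fn0 : ∀ n, ((0 : M), n) ∈ Δ → n = 0 := by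
    intro n hn
    obtain ⟨y', hy'⟩ := hs A PUnit 0 (LinearMap.toSpanSingleton A N n) 0 (by
      intro ξ
      have := Δ.smul_mem ξ hn
      simpa using this)
    have := hy' 1
    simp only [LinearMap.zero_apply, map_zero] at this
    simpa using this.symm
  have fn : ∀ m n n', (m, n) ∈ Δ → (m, n') ∈ Δ → n = n' := by
    intro m n n' h h'
    have := Δ.sub_mem h h'
    rw [← sub_eq_zero]
    apply fn0
    simpa using this
  choose e he using tot
  refine ⟨{ toFun := e, map_add' := ?_, map_smul' := ?_ }, ?_⟩
  · intro a b
    exact fn _ _ _ (he _) (Δ.add_mem (he a) (he b))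
  · intro r a
    exact fn _ _ _ (he _) (Δ.smul_mem r (he a))
  · rintro ⟨m, n⟩ hp
    exact fn _ _ _ (he _) (hle hp)

theorem exists_hom (hN : PPDCC A N) {X : Type} [AddCommGroup X] [Module A X]
    [Module.FinitePresentation A X] (x : X →ₗ[A] M) (y : X →ₗ[A] N)
    (h : ∀ (Y : Type) [AddCommGroup Y] [Module A Y] [Module.FinitePresentation A Y]
      (k : X →ₗ[A] Y), (∃ u : Y →ₗ[A] M, u.comp k = x) → ∃ v : Y →ₗ[A] N, v.comp k = y) :
    ∃ e : M →ₗ[A] N, e.comp x = y := by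
  obtain ⟨e, he⟩ := star_graph hN (LinearMap.range (x.prod y)) (by
    refine star_of_free _ ?_
    intro n Y _ _ _ k b y₀ hy
    have : ∀ i : Fin n, ∃ z, x z = y₀ (k (Pi.single i 1)) ∧ y z = b (Pi.single i 1) := by
      intro i
      obtain ⟨z, hz⟩ := hy (Pi.single i 1)
      exact ⟨z, by simpa using hz⟩
    choose z hz hz' using this
    let ζ : (Fin n → A) →ₗ[A] X := (Pi.basisFun A (Fin n)).constr ℕ z
    have hζ : ∀ i, ζ (Pi.single i 1) = z i := by
      intro i
      rw [← Pi.basisFun_apply, Module.Basis.constr_basis]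
    have h1 : x.comp ζ = y₀.comp k := by
      apply (Pi.basisFun A (Fin n)).ext
      intro i
      simp [hζ, hz]
    have h2 : y.comp ζ = b := by
      apply (Pi.basisFun A (Fin n)).ext
      intro i
      simp [hζ, hz']
    obtain ⟨v, hv⟩ := h (PO ζ k) (pinl ζ k)
      ⟨pdesc ζ k x y₀ (fun ξ => LinearMap.congr_fun h1 ξ), by
        ext ξ
        simp⟩
    refine ⟨v.comp (pinr ζ k), fun ξ => ?_⟩
    rw [LinearMap.comp_apply, ← po_cond, ← LinearMap.comp_apply, hv, ← h2]
    rfl)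
  refine ⟨e, ?_⟩
  ext ξ
  exact he (x ξ, y ξ) ⟨ξ, rfl⟩

/-- pointed version -/
theorem exists_hom_pt (hN : PPDCC A N) (x : M) (y : N)
    (h : ∀ d : Pt A, x ∈ pp M d → y ∈ pp N d) : ∃ e : M →ₗ[A] N, e x = y := by
  obtain ⟨e, he⟩ := exists_hom hN (LinearMap.toSpanSingleton A M x)
    (LinearMap.toSpanSingleton A N y) (by
      intro Y _ _ _ k
      rintro ⟨u, hu⟩
      obtain ⟨v, hv⟩ := h ⟨Y, k 1⟩ ⟨u, by
        have := LinearMap.congr_fun hu 1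
        simpa using this⟩
      refine ⟨v, ?_⟩
      ext
      simpa using hv)
  have := LinearMap.congr_fun he 1
  exact ⟨e, by simpa using this⟩

end PP
end CB

namespace CB

section Len
theorem compLength_eq {R : Type} [Ring R] {M : Type} [AddCommGroup M] [Module R M]
    (h : IsFiniteLength R M) : (compLength R M : ℕ∞) = Module.length R M := by
  have h' := isFiniteLength_iff_exists_compositionSeries.1 h
  unfold compLength
  rw [dif_pos h']
  exact Module.length_compositionSeries _ h'.choose_spec.1 h'.choose_spec.2

theorem length_le_of {R : Type} [Ring R] {Q : Type} [AddCommGroup Q] [Module R Q]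
    (r : Submodule R Q → ℕ) (hr : StrictMono r) (n : ℕ) (hn : ∀ H, r H ≤ n) :
    Module.length R Q ≤ n := by
  have : (Module.length R Q : WithBot ℕ∞) ≤ n := by
    rw [Module.coe_length]
    refine iSup_le fun p => ?_
    have h := LTSeries.head_add_length_le_nat (p.map r hr)
    have h2 : (p.map r hr).last ≤ n := by
      rw [LTSeries.last_map]
      exact hn _
    have h3 : p.length ≤ n := by
      have : (p.map r hr).length = p.length := rfl
      omega
    exact_mod_cast h3
  exact_mod_cast this

end Len

section ChiM
variable {A : Type} [Ring A] (M : Type) [AddCommGroup M] [Module A M]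
variable {X Y Z : Type} [AddCommGroup X] [Module A X] [AddCommGroup Y] [Module A Y]
  [AddCommGroup Z] [Module A Z]

/-- precomposition -/
def pre (f : X →ₗ[A] Y) : (Y →ₗ[A] M) →ₗ[Module.End A M] (X →ₗ[A] M) where
  toFun y := y.comp f
  map_add' _ _ := rfl
  map_smul' _ _ := rfl

variable {M}

theorem finLen_hom (hM : IsEndofinite A M) [Module.Finite A X] :
    IsFiniteLength (Module.End A M) (X →ₗ[A] M) := by
  obtain ⟨G, hG⟩ := (Module.Finite.fg_top : (⊤ : Submodule A X).FG)
  obtain ⟨_, _⟩ := isFiniteLength_iff_isNoetherian_isArtinian.1 hM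
  let ev : (X →ₗ[A] M) →ₗ[Module.End A M] (G → M) :=
    { toFun := fun y g => y g
      map_add' := fun _ _ => rfl
      map_smul' := fun _ _ => rfl }
  have hev : Function.Injective ev := by
    intro y y' h
    refine LinearMap.ext_on (s := (G : Set X)) hG ?_
    intro g hg
    exact congrFun h ⟨g, hg⟩
  exact isFiniteLength_iff_isNoetherian_isArtinian.2
    ⟨isNoetherian_of_injective ev hev, isArtinian_of_injective ev hev⟩

theorem chiM_eq (hM : IsEndofinite A M) (X : Type) [AddCommGroup X] [Module A X]
    [Module.Finite A X] :
    (chiMod A M X : ℕ∞) = Module.length (Module.End A M) (X →ₗ[A] M) :=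
  compLength_eq (finLen_hom hM)

theorem chiM_ex (hM : IsEndofinite A M) [Module.Finite A X] [Module.Finite A Y]
    [Module.Finite A Z] (f : X →ₗ[A] Y) (g : Y →ₗ[A] Z) (h : Function.Exact f g)
    (hg : Function.Surjective g) :
    (chiMod A M X : ℕ∞) + chiMod A M Z = chiMod A M Y +
      Module.length (Module.End A M) ((X →ₗ[A] M) ⧸ LinearMap.range (pre M f)) := by
  rw [chiM_eq hM, chiM_eq hM, chiM_eq hM]
  have h1 := Module.length_eq_add_of_exact (R := Module.End A M)
    (LinearMap.range (pre M f)).subtype (LinearMap.range (pre M f)).mkQ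
    (Submodule.subtype_injective _) (Submodule.mkQ_surjective _)
    (LinearMap.exact_subtype_mkQ _)
  have h2 := Module.length_eq_add_of_exact (R := Module.End A M)
    (pre M g) (pre M f).rangeRestrict (by
      intro z z' hz
      ext a
      obtain ⟨b, rfl⟩ := hg a
      exact LinearMap.congr_fun hz b) (LinearMap.surjective_rangeRestrict _) (by
      intro y
      constructor
      · intro hy
        have hy' : ∀ x, y (f x) = 0 := fun x => LinearMap.congr_fun (congrArg Subtype.val hy) x
        obtain ⟨z, hz⟩ := exists_factor g hg y (by
          intro b hb
          obtain ⟨a, rfl⟩ := (h b).1 hb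
          exact hy' a)
        exact ⟨z, LinearMap.ext hz⟩
      · rintro ⟨z, rfl⟩
        apply Subtype.ext
        ext a
        have : g (f a) = 0 := (h (f a)).2 ⟨a, rfl⟩
        change z (g (f a)) = 0
        rw [this, map_zero])
  rw [h1, h2]
  ring

theorem chiM_sub (hM : IsEndofinite A M) : IsSubadditive A (chiMod A M) := by
  refine ⟨?_, ?_, ?_⟩
  · intro X Y _ _ _ _ _ _ e
    have : (chiMod A M X : ℕ∞) = chiMod A M Y := by
      rw [chiM_eq hM, chiM_eq hM]
      apply le_antisymm
      · refine Module.length_le_of_injective (pre M e.symm.toLinearMap) ?_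
        intro z z' hz
        ext a
        simpa [pre] using LinearMap.congr_fun hz (e a)
      · refine Module.length_le_of_injective (pre M e.toLinearMap) ?_
        intro z z' hz
        ext a
        simpa [pre] using LinearMap.congr_fun hz (e.symm a)
    exact_mod_cast this
  · intro X Y _ _ _ _ _ _
    have : (chiMod A M (X × Y) : ℕ∞) = chiMod A M X + chiMod A M Y := by
      rw [chiM_eq hM, chiM_eq hM, chiM_eq hM, ← Module.length_prod]
      exact (LinearEquiv.length_eq (LinearMap.coprodEquiv (Module.End A M))).symm
    exact_mod_cast this
  · intro X Y Z _ _ _ _ _ _ _ _ _ f g h hg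
    have := chiM_ex hM f g h hg
    have h2 : (chiMod A M Y : ℕ∞) ≤ chiMod A M X + chiMod A M Z := by
      rw [this]
      exact le_self_add
    exact_mod_cast h2

theorem chiM_A (hM : IsEndofinite A M) [Nontrivial M] : chiMod A M A ≠ 0 := by
  intro h
  have := chiM_eq hM A
  rw [h, LinearEquiv.length_eq (LinearMap.ringLmapEquivSelf A (Module.End A M) M)] at this
  have h2 := Module.length_pos (R := Module.End A M) (M := M)
  rw [← this] at h2
  simp at h2

theorem sig_iff (hM : IsEndofinite A M) [Module.Finite A X] [Module.Finite A Y]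
    (f : X →ₗ[A] Y) : Sig (chiMod A M) f ↔ Inj M f := by
  have h1 := chiM_ex hM f (LinearMap.range f).mkQ (by
    intro y; simp) (Submodule.mkQ_surjective _)
  have h2 : Sig (chiMod A M) f ↔
      Module.length (Module.End A M) ((X →ₗ[A] M) ⧸ LinearMap.range (pre M f)) = 0 := by
    unfold Sig
    constructor
    · intro h
      have h' : (chiMod A M X : ℕ∞) + chiMod A M (Y ⧸ LinearMap.range f) = chiMod A M Y := by
        exact_mod_cast h
      rw [h'] at h1
      by_contra hne
      cases hl : Module.length (Module.End A M) ((X →ₗ[A] M) ⧸ LinearMap.range (pre M f)) with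
      | top => rw [hl] at h1; simp at h1
      | coe n =>
        rw [hl] at h1 hne
        norm_cast at h1 hne
        omega
    · intro h
      rw [h, add_zero] at h1
      exact_mod_cast h1
  rw [h2, Module.length_eq_zero_iff, Submodule.Quotient.subsingleton_iff,
    LinearMap.range_eq_top]
  rfl

end ChiM

section Three
variable {A : Type} [Ring A] {χ : Fn A} (hχ : IsSubadditive A χ)
variable {M : Type} [AddCommGroup M] [Module A M]

/-- `M` is injective for all of `Sig` -/
def SigInj (χ : Fn A) (M : Type) [AddCommGroup M] [Module A M] : Prop :=
  ∀ (X Y : Type) [AddCommGroup X] [Module A X] [AddCommGroup Y] [Module A Y]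
    [Module.FinitePresentation A X] [Module.FinitePresentation A Y] (f : X →ₗ[A] Y),
    Sig χ f → Inj M f

/-- maps from `X` to f.p. modules -/
structure Kp (A : Type) [Ring A] (X : Type) [AddCommGroup X] [Module A X] where
  Y : Type
  [g : AddCommGroup Y]
  [m : Module A Y]
  [fp : Module.FinitePresentation A Y]
  k : X →ₗ[A] Y

attribute [instance] Kp.g Kp.m Kp.fp

variable {X : Type} [AddCommGroup X] [Module A X]

/-- image subgroups -/
def Kp.im (M : Type) [AddCommGroup M] [Module A M] (k : Kp A X) :
    Submodule (Module.End A M) (X →ₗ[A] M) := LinearMap.range (pre M k.k)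

theorem Kp.mem_im {k : Kp A X} {x : X →ₗ[A] M} : x ∈ k.im M ↔ ∃ y : k.Y →ₗ[A] M, y.comp k.k = x :=
  Iff.rfl

/-- rank -/
def Kp.rho (χ : Fn A) (k : Kp A X) : ℕ := χ k.Y - χ (k.Y ⧸ LinearMap.range k.k)

/-- composition -/
def Kp.comp (k : Kp A X) {Z : Type} [AddCommGroup Z] [Module A Z] [Module.FinitePresentation A Z]
    (g : k.Y →ₗ[A] Z) : Kp A X := ⟨Z, g.comp k.k⟩

/-- sum -/
def Kp.sum (k l : Kp A X) : Kp A X := ⟨k.Y × l.Y, k.k.prod l.k⟩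

theorem Kp.sum_im (k l : Kp A X) : (k.sum l).im M = k.im M ⊔ l.im M := by
  apply le_antisymm
  · rintro _ ⟨(y : k.Y × l.Y →ₗ[A] M), rfl⟩
    refine Submodule.mem_sup.2 ⟨_, ⟨y.comp (LinearMap.inl A _ _), rfl⟩, _,
      ⟨y.comp (LinearMap.inr A _ _), rfl⟩, ?_⟩
    ext a
    change y (k.k a, 0) + y (0, l.k a) = y (k.k a, l.k a)
    rw [← map_add]
    simp
  · apply sup_le
    · rintro _ ⟨y, rfl⟩
      exact ⟨y.comp (LinearMap.fst A _ _), rfl⟩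
    · rintro _ ⟨y, rfl⟩
      exact ⟨y.comp (LinearMap.snd A _ _), rfl⟩

variable [Module.FinitePresentation A X]

/-- conjunction -/
def Kp.conj (k l : Kp A X) : Kp A X := ⟨PO k.k l.k, (pinl k.k l.k).comp k.k⟩

theorem Kp.mem_conj (k l : Kp A X) (x : X →ₗ[A] M) :
    x ∈ (k.conj l).im M ↔ x ∈ k.im M ∧ x ∈ l.im M := by
  constructor
  · rintro ⟨(y : PO k.k l.k →ₗ[A] M), rfl⟩
    refine ⟨⟨y.comp (pinl k.k l.k), rfl⟩, ⟨y.comp (pinr k.k l.k), ?_⟩⟩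
    ext a
    change y (pinr k.k l.k (l.k a)) = y (pinl k.k l.k (k.k a))
    rw [po_cond]
  · rintro ⟨⟨y, hy⟩, ⟨y', hy'⟩⟩
    have hc : ∀ a, y (k.k a) = y' (l.k a) := fun a => LinearMap.congr_fun (hy.trans hy'.symm) a
    refine ⟨pdesc k.k l.k y y' hc, ?_⟩
    refine Eq.trans ?_ hy
    ext a
    exact pdesc_inl k.k l.k y y' hc (k.k a)

include hχ

theorem Kp.rho_le (k : Kp A X) : k.rho χ ≤ χ X := by
  have := coker_le hχ k.k
  unfold Kp.rho
  omega

theorem Kp.rho_comp_aux (k : Kp A X) {Z : Type} [AddCommGroup Z] [Module A Z]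
    [Module.FinitePresentation A Z] (g : k.Y →ₗ[A] Z) :
    (k.comp g).rho χ ≤ k.rho χ ∧
      ((k.comp g).rho χ = k.rho χ → Sig χ (pinl k.k (g.comp k.k))) := by
  obtain ⟨c, hc, hc'⟩ := exact_po hχ k.k (g.comp k.k)
  have h1 := chi_coker hχ _ c hc hc'
  have h2 : χ (PO k.k (g.comp k.k)) = χ ((k.Y ⧸ LinearMap.range k.k) × Z) := by
    refine chi_coker hχ (k.k.prod (-(g.comp k.k)))
      ((((LinearMap.range k.k).mkQ).comp (LinearMap.fst A _ _)).prod
        (g.comp (LinearMap.fst A _ _) + LinearMap.snd A _ _)) ?_ ?_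
    · rintro ⟨a, b⟩
      change ((Submodule.Quotient.mk a : k.Y ⧸ LinearMap.range k.k), g a + b) = 0 ↔
        ∃ x, (k.k x, -(g (k.k x))) = (a, b)
      rw [Prod.mk_eq_zero, Submodule.Quotient.mk_eq_zero]
      constructor
      · rintro ⟨⟨x, rfl⟩, h⟩
        exact ⟨x, by rw [eq_neg_of_add_eq_zero_right h]⟩
      · rintro ⟨x, hx⟩
        obtain ⟨rfl, rfl⟩ := Prod.mk.inj hx
        exact ⟨⟨x, rfl⟩, by simp⟩
    · rintro ⟨q, z⟩
      obtain ⟨y, rfl⟩ := Submodule.mkQ_surjective _ q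
      exact ⟨(y, z - g y), by simp⟩
  rw [chi_prod hχ] at h2
  have h3 := coker_le hχ (pinl k.k (g.comp k.k))
  have h4 := coker_le' hχ k.k
  have h5 := coker_le' hχ (g.comp k.k)
  unfold Kp.rho Kp.comp Sig
  simp only
  constructor
  · omega
  · intro h
    omega

theorem Kp.im_comp (hM : SigInj χ M) (k : Kp A X) {Z : Type} [AddCommGroup Z] [Module A Z]
    [Module.FinitePresentation A Z] (g : k.Y →ₗ[A] Z) (h : (k.comp g).rho χ = k.rho χ) :
    k.im M ≤ (k.comp g).im M := by
  rintro _ ⟨y, rfl⟩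
  obtain ⟨w, hw⟩ := hM _ _ _ ((k.rho_comp_aux hχ g).2 h) y
  change _ ∈ LinearMap.range (pre M (g.comp k.k))
  refine ⟨(w.comp (pinr k.k (g.comp k.k)) : Z →ₗ[A] M), ?_⟩
  rw [← hw]
  ext a
  change w (pinr k.k (g.comp k.k) ((g.comp k.k) a)) = w (pinl k.k (g.comp k.k) (k.k a))
  rw [po_cond]

omit hχ [Module.FinitePresentation A X] in
/-- rank of a subgroup -/
noncomputable def rr (χ : Fn A) (H : Submodule (Module.End A M) (X →ₗ[A] M)) : ℕ :=
  sSup {n | ∃ k : Kp A X, k.im M ≤ H ∧ k.rho χ = n}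

theorem rr_bdd (H : Submodule (Module.End A M) (X →ₗ[A] M)) :
    BddAbove {n | ∃ k : Kp A X, k.im M ≤ H ∧ k.rho χ = n} := by
  refine ⟨χ X, ?_⟩
  rintro _ ⟨k, -, rfl⟩
  exact k.rho_le hχ

omit hχ in
theorem rr_ne (H : Submodule (Module.End A M) (X →ₗ[A] M)) :
    {n | ∃ k : Kp A X, k.im M ≤ H ∧ k.rho χ = n}.Nonempty := by
  refine ⟨_, ⟨PUnit, 0⟩, ?_, rfl⟩
  rintro _ ⟨y, rfl⟩
  have : pre M (0 : X →ₗ[A] PUnit) y = 0 := by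
    ext a
    exact map_zero y
  change pre M (0 : X →ₗ[A] PUnit) y ∈ H
  rw [this]
  exact H.zero_mem

theorem le_rr (H : Submodule (Module.End A M) (X →ₗ[A] M)) (k : Kp A X) (h : k.im M ≤ H) :
    k.rho χ ≤ rr χ H := le_csSup (rr_bdd hχ H) ⟨k, h, rfl⟩

theorem rr_le (H : Submodule (Module.End A M) (X →ₗ[A] M)) : rr χ H ≤ χ X := by
  refine csSup_le (rr_ne H) ?_
  rintro _ ⟨k, -, rfl⟩
  exact k.rho_le hχ

theorem rr_lt (hM : SigInj χ M) (H : Submodule (Module.End A M) (X →ₗ[A] M)) (k : Kp A X)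
    (h : H < k.im M) : rr χ H < rr χ (k.im M) := by
  obtain ⟨l, hl, hl'⟩ := Nat.sSup_mem (rr_ne H) (rr_bdd hχ H)
  change l.rho χ = rr χ H at hl'
  rw [← hl']
  have him : (l.sum k).im M = k.im M := by
    rw [Kp.sum_im, sup_eq_right]
    exact hl.trans h.le
  have h1 := (l.sum k).rho_comp_aux hχ (LinearMap.fst A l.Y k.Y)
  have h2 := (l.sum k).im_comp hχ hM (LinearMap.fst A l.Y k.Y)
  have h3 : (l.sum k).comp (LinearMap.fst A l.Y k.Y) = l := rfl
  rw [h3] at h1 h2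
  refine lt_of_lt_of_le ?_ (le_rr hχ _ (l.sum k) him.le)
  refine lt_of_le_of_ne h1.1 fun h' => ?_
  have := h2 h'
  rw [him] at this
  exact absurd (this.trans hl) (not_le_of_gt h)

theorem ppdcc_of (hM : SigInj χ M) : PPDCC A M := by
  intro S hS
  let φ : Pt A → Kp A A := fun d => ⟨d.Y, LinearMap.toSpanSingleton A d.Y d.η⟩
  have hφ : ∀ d n, n ∈ pp M d ↔ LinearMap.toSpanSingleton A M n ∈ (φ d).im M := by
    intro d n
    constructor
    · rintro ⟨y, rfl⟩
      refine ⟨y, ?_⟩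
      ext
      simp [pre, φ]
    · rintro ⟨y, hy⟩
      refine ⟨y, ?_⟩
      have := LinearMap.congr_fun hy 1
      simpa [pre, φ] using this
  have hle : ∀ d d', pp M d ≤ pp M d' ↔ (φ d).im M ≤ (φ d').im M := by
    intro d d'
    constructor
    · intro h x hx
      have e : x = LinearMap.toSpanSingleton A M (x 1) := by
        ext
        simp
      rw [e, ← hφ] at hx ⊢
      exact h hx
    · intro h n hn
      rw [hφ] at hn ⊢
      exact h hn
  obtain ⟨d, hd, hmin⟩ := exists_minimal_of_wellFoundedLT (fun n => ∃ d ∈ S, rr χ ((φ d).im M) = n)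
    ⟨_, hS.choose, hS.choose_spec, rfl⟩
  obtain ⟨d, hd, rfl⟩ := hd
  refine ⟨d, hd, fun d' hd' h => le_antisymm h ?_⟩
  by_contra hn
  rw [hle] at h hn
  have h1 := rr_lt hχ hM _ (φ d) (lt_of_le_not_ge h hn)
  exact absurd (hmin ⟨d', hd', rfl⟩ h1.le) (not_le_of_gt h1)

theorem cyc (hM : SigInj χ M) (x : X →ₗ[A] M) :
    ∃ k : Kp A X, x ∈ k.im M ∧ ∀ H : Submodule (Module.End A M) (X →ₗ[A] M), x ∈ H →
      k.im M ≤ H := by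
  obtain ⟨n, hn, hmin⟩ := exists_minimal_of_wellFoundedLT
    (fun n => ∃ k : Kp A X, x ∈ k.im M ∧ rr χ (k.im M) = n)
    ⟨_, ⟨X, LinearMap.id⟩, ⟨x, rfl⟩, rfl⟩
  obtain ⟨k, hk, rfl⟩ := hn
  refine ⟨k, hk, fun H hH y hy => ?_⟩
  obtain ⟨e, rfl⟩ := exists_hom (ppdcc_of hχ hM) x y (by
    intro Y _ _ _ k' hk'
    have h1 : x ∈ (k.conj ⟨Y, k'⟩).im M := (Kp.mem_conj _ _ _).2 ⟨hk, hk'⟩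
    have h2 : k.im M ≤ (k.conj ⟨Y, k'⟩).im M := by
      by_contra hn
      have h3 : (k.conj ⟨Y, k'⟩).im M < k.im M :=
        lt_of_le_not_ge (fun z hz => ((Kp.mem_conj _ _ _).1 hz).1) hn
      have h4 := rr_lt hχ hM _ k h3
      exact absurd (hmin ⟨_, h1, rfl⟩ h4.le) (not_le_of_gt h4)
    exact ((Kp.mem_conj _ _ _).1 (h2 hy)).2)
  exact H.smul_mem e hH

theorem all_im (hM : SigInj χ M) (H : Submodule (Module.End A M) (X →ₗ[A] M)) :
    ∃ k : Kp A X, k.im M = H := by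
  have hb : BddAbove {n | ∃ k : Kp A X, k.im M ≤ H ∧ rr χ (k.im M) = n} := by
    refine ⟨χ X, ?_⟩
    rintro _ ⟨k, -, rfl⟩
    exact rr_le hχ _
  obtain ⟨_, k₀, hk₀, -⟩ := rr_ne (χ := χ) H
  obtain ⟨k, hk, hk'⟩ := Nat.sSup_mem (⟨_, k₀, hk₀, rfl⟩ :
    {n | ∃ k : Kp A X, k.im M ≤ H ∧ rr χ (k.im M) = n}.Nonempty) hb
  refine ⟨k, le_antisymm hk fun x hx => ?_⟩
  by_contra hn
  obtain ⟨l, hl, hl'⟩ := cyc hχ hM x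
  have h1 : k.im M < (k.sum l).im M := by
    rw [Kp.sum_im]
    refine lt_of_le_not_ge le_sup_left fun h => hn (h (Submodule.mem_sup_right hl))
  have h2 := rr_lt hχ hM _ _ h1
  have h3 : rr χ ((k.sum l).im M) ≤ _ := le_csSup hb ⟨k.sum l, by
    rw [Kp.sum_im]
    exact sup_le hk (hl' H hx), rfl⟩
  omega

theorem rr_strict (hM : SigInj χ M) :
    StrictMono (rr χ : Submodule (Module.End A M) (X →ₗ[A] M) → ℕ) := by
  intro H H' h
  obtain ⟨k, rfl⟩ := all_im hχ hM H'
  exact rr_lt hχ hM _ _ h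

theorem hom_len (hM : SigInj χ M) : Module.length (Module.End A M) (X →ₗ[A] M) ≤ χ X :=
  length_le_of _ (rr_strict hχ hM) _ (rr_le hχ)

theorem quot_len (hM : SigInj χ M) (k : Kp A X) :
    Module.length (Module.End A M) ((X →ₗ[A] M) ⧸ k.im M) ≤ (χ X - k.rho χ : ℕ) := by
  have hk : ∀ H : Submodule (Module.End A M) ((X →ₗ[A] M) ⧸ k.im M),
      k.im M ≤ H.comap (k.im M).mkQ := by
    intro H x hx
    have : (k.im M).mkQ x = 0 := by simpa using hx
    rw [Submodule.mem_comap, this]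
    exact H.zero_mem
  have hge := fun H => le_rr hχ _ k (hk H)
  have hle := fun H : Submodule (Module.End A M) ((X →ₗ[A] M) ⧸ k.im M) =>
    rr_le hχ (H.comap (k.im M).mkQ)
  refine length_le_of (fun H => rr χ (H.comap (k.im M).mkQ) - k.rho χ) ?_ _ ?_
  · intro H H' h
    have h1 : H.comap (k.im M).mkQ < H'.comap (k.im M).mkQ := by
      refine lt_of_le_not_ge (Submodule.comap_mono h.le) fun hc => ?_
      refine absurd ?_ (not_le_of_gt h)
      intro z hz
      obtain ⟨y, rfl⟩ := Submodule.mkQ_surjective _ z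
      exact hc hz
    have h2 := rr_strict hχ hM h1
    have h3 := hge H
    have h4 := hge H'
    simp only
    omega
  · intro H
    have h3 := hge H
    have h4 := hle H
    omega

omit [Module.FinitePresentation A X] in
theorem endofinite_of (hM : SigInj χ M) : IsEndofinite A M := by
  have h := hom_len hχ (X := A) hM
  rw [LinearEquiv.length_eq (LinearMap.ringLmapEquivSelf A (Module.End A M) M)] at h
  refine Module.length_ne_top_iff.1 (ne_of_lt (lt_of_le_of_lt h ?_))
  exact ENat.natCast_lt_top _

theorem chiM_le (hM : SigInj χ M) : chiMod A M X ≤ χ X := by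
  have := hom_len hχ (X := X) hM
  rw [← chiM_eq (endofinite_of hχ hM)] at this
  exact_mod_cast this

theorem chiM_diff (hM : SigInj χ M) {Y Z : Type} [AddCommGroup Y] [Module A Y]
    [AddCommGroup Z] [Module A Z] [Module.FinitePresentation A Y] [Module.FinitePresentation A Z]
    (f : X →ₗ[A] Y) (g : Y →ₗ[A] Z) (h : Function.Exact f g) (hg : Function.Surjective g) :
    chiMod A M X + chiMod A M Z + χ Y ≤ chiMod A M Y + χ X + χ Z := by
  have h1 := chiM_ex (endofinite_of hχ hM) f g h hg
  have h2 := quot_len hχ hM ⟨Y, f⟩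
  change Module.length (Module.End A M) ((X →ₗ[A] M) ⧸ LinearMap.range (pre M f)) ≤ _ at h2
  have h3 := chi_coker hχ f g h hg
  have h4 := coker_le' hχ f
  have h5 := coker_le hχ f
  unfold Kp.rho at h2
  simp only [h3] at h2
  have h6 : (chiMod A M X : ℕ∞) + chiMod A M Z ≤ chiMod A M Y + (χ X - (χ Y - χ Z) : ℕ) := by
    rw [h1]
    gcongr
  have h7 : chiMod A M X + chiMod A M Z ≤ chiMod A M Y + (χ X - (χ Y - χ Z) : ℕ) := by
    exact_mod_cast h6
  omega

end Three
end CB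

namespace CB
section V
variable {A : Type} [Ring A] {N : Type} [AddCommGroup N] [Module A N]

theorem ppdcc_endo (hN : IsEndofinite A N) : PPDCC A N := by
  intro S hS
  obtain ⟨_, _⟩ := isFiniteLength_iff_isNoetherian_isArtinian.1 hN
  obtain ⟨_, ⟨d, hd, rfl⟩, hmin⟩ := WellFounded.has_min
    (wellFounded_lt (α := Submodule (Module.End A N) N)) (pp N '' S) (hS.image _)
  refine ⟨d, hd, fun d' hd' hle => ?_⟩
  by_contra hne
  exact hmin _ ⟨d', hd', rfl⟩ (lt_of_le_of_ne hle hne)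

theorem ppacc_endo (hN : IsEndofinite A N) (S : Set (Pt A)) (hS : S.Nonempty) :
    ∃ d ∈ S, ∀ d' ∈ S, pp N d ≤ pp N d' → pp N d' = pp N d := by
  obtain ⟨_, _⟩ := isFiniteLength_iff_isNoetherian_isArtinian.1 hN
  obtain ⟨_, ⟨d, hd, rfl⟩, hmin⟩ := WellFounded.has_min
    (wellFounded_gt (α := Submodule (Module.End A N) N)) (pp N '' S) (hS.image _)
  refine ⟨d, hd, fun d' hd' hle => ?_⟩
  by_contra hne
  exact hmin _ ⟨d', hd', rfl⟩ (lt_of_le_of_ne hle (Ne.symm hne))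

/-- independence -/
def Indep (A : Type) [Ring A] {N : Type} [AddCommGroup N] [Module A N] (B : Set N) : Prop :=
  ∀ F : Finset N, (F : Set N) ⊆ B → ∀ b ∈ B, b ∉ F →
    ∃ ε : Module.End A N, ε b = b ∧ ∀ a ∈ F, ε a = 0

theorem exists_maxIndep (x : N) : ∃ B : Set N, x ∈ B ∧ Maximal (Indep A) B := by
  obtain ⟨B, hB, hmax⟩ := zorn_subset_nonempty {B : Set N | Indep A B} (by
    intro c hc hch hne
    refine ⟨⋃₀ c, ?_, fun s hs => Set.subset_sUnion_of_mem hs⟩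
    intro F hF b hb hbF
    classical
    have h1 : ((insert b F : Finset N) : Set N) ⊆ ⋃₀ c := by
      intro a ha
      rw [Finset.coe_insert] at ha
      rcases ha with rfl | ha
      · exact hb
      · exact hF ha
    obtain ⟨t, ht, hsub⟩ := DirectedOn.exists_mem_subset_of_finite_of_subset_sUnion hne
      hch.directedOn (Finset.finite_toSet _) h1
    exact hc ht F (fun a ha => hsub (by simp [Finset.mem_coe.1 ha])) b (hsub (by simp)) hbF)
    {x} (by
      intro F hF b hb hbF
      rw [Set.mem_singleton_iff] at hb
      subst hb
      refine ⟨1, rfl, fun a ha => ?_⟩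
      have := hF ha
      rw [Set.mem_singleton_iff] at this
      subst this
      exact absurd ha hbF)
  exact ⟨B, hB rfl, hmax⟩

theorem indep_kill {B : Set N} (hB : Maximal (Indep A) B) (ε ε' : Module.End A N)
    (hε : ∀ b ∈ B, ε b = 0) (s : N) (h : ε' (ε s) = s) : s = 0 := by
  classical
  by_cases hs : s ∈ B
  · rw [hε s hs, map_zero] at h
    exact h.symm
  have hn : ¬ Indep A (insert s B) := fun hi =>
    hs (hB.2 hi (Set.subset_insert _ _) (Set.mem_insert _ _))
  exfalso
  apply hn
  intro F hF b hb hbF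
  by_cases hbs : b = s
  · subst hbs
    refine ⟨ε' * ε, h, fun a ha => ?_⟩
    have haB : a ∈ B := by
      rcases hF ha with rfl | h'
      · exact absurd ha hbF
      · exact h'
    change ε' (ε a) = 0
    rw [hε a haB, map_zero]
  · have hbB : b ∈ B := hb.resolve_left hbs
    obtain ⟨δ, hδ, hδF⟩ := hB.1 (F.erase s) (by
      intro a ha
      rw [Finset.coe_erase] at ha
      exact (hF ha.1).resolve_left ha.2) b hbB (fun h' => hbF (Finset.mem_of_mem_erase h'))
    refine ⟨δ - δ * ε' * ε, ?_, fun a ha => ?_⟩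
    · change δ b - δ (ε' (ε b)) = b
      rw [hε b hbB, map_zero, map_zero, sub_zero, hδ]
    · change δ a - δ (ε' (ε a)) = 0
      by_cases has : a = s
      · rw [has, h, sub_self]
      · rw [hε a ((hF ha).resolve_left has), map_zero, map_zero, sub_zero]
        exact hδF a (Finset.mem_erase.2 ⟨has, ha⟩)

theorem indep_nilp (hN : IsEndofinite A N) {B : Set N} (hB : Maximal (Indep A) B)
    (ε : Module.End A N) (hε : ∀ b ∈ B, ε b = 0) : IsNilpotent ε := by
  obtain ⟨_, _⟩ := isFiniteLength_iff_isNoetherian_isArtinian.1 hN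
  let C : N → Submodule (Module.End A N) N := fun s => Submodule.span _ {s}
  have hlt : ∀ s, s ≠ 0 → C (ε s) < C s := by
    intro s hs
    have h1 : C (ε s) ≤ C s := by
      rw [Submodule.span_singleton_le_iff_mem]
      exact Submodule.mem_span_singleton.2 ⟨ε, rfl⟩
    refine lt_of_le_not_ge h1 fun h2 => hs ?_
    obtain ⟨ε', h⟩ := Submodule.mem_span_singleton.1 (h2 (Submodule.mem_span_singleton_self s))
    exact indep_kill hB ε ε' hε s h
  have key : ∀ (k : ℕ) (s : N), (ε ^ k) s = 0 ∨ (k : ℕ∞) ≤ Order.height (C s) := by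
    intro k
    induction k with
    | zero => intro s; right; simp
    | succ k ih =>
      intro s
      by_cases hs : s = 0
      · left; rw [hs, map_zero]
      rcases ih (ε s) with h | h
      · left
        rw [pow_succ]
        exact h
      · right
        have := Order.height_strictMono (hlt s hs) (Submodule.height_lt_top _)
        push_cast
        exact (add_le_add_left h 1).trans (Order.add_one_le_of_lt this)
  have htop : Module.length (Module.End A N) N ≠ ⊤ := Module.length_ne_top
  obtain ⟨n, hn⟩ := ENat.ne_top_iff_exists.1 htop
  refine ⟨n + 1, ?_⟩
  ext s
  rcases key (n + 1) s with h | h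
  · exact h
  · exfalso
    have h2 : Order.height (C s) ≤ Order.height (⊤ : Submodule (Module.End A N) N) :=
      Order.height_mono le_top
    rw [← Module.length_eq_height, ← hn] at h2
    have := h.trans h2
    norm_cast at this
    omega

theorem core (hN : IsEndofinite A N) (x : N) : ∃ p : Module.End A N, p * p = p ∧ p x = x ∧
    ∀ ε : Module.End A N, ε * p = ε → ε x = 0 → IsNilpotent ε := by
  classical
  obtain ⟨B, hxB, hB⟩ := exists_maxIndep (A := A) x
  let G : Set (N × N) := (fun b => (b, if b = x then b else 0)) '' B
  obtain ⟨e, he⟩ := star_graph (ppdcc_endo hN) (Submodule.span A G) (by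
    intro K Y _ _ _ _ _ _ k b y hy
    have hfg : (LinearMap.range ((y.comp k).prod b)).FG := by
      rw [LinearMap.range_eq_map]
      exact Module.Finite.fg_top.map _
    obtain ⟨t, ht⟩ := hfg
    obtain ⟨T, hT, htT⟩ := Submodule.subset_span_finite_of_subset_span (R := A) (s := G) (t := t)
      (by
        intro p hp
        have : p ∈ LinearMap.range ((y.comp k).prod b) := by
          rw [← ht]
          exact Submodule.subset_span hp
        obtain ⟨ξ, rfl⟩ := this
        exact hy ξ)
    obtain ⟨ε, hεx, hεF⟩ := hB.1 ((T.image Prod.fst).erase x) (by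
      intro a ha
      rw [Finset.mem_coe, Finset.mem_erase, Finset.mem_image] at ha
      obtain ⟨-, q, hq, rfl⟩ := ha
      obtain ⟨b', hb', rfl⟩ := hT hq
      exact hb') x hxB (by simp)
    refine ⟨ε.comp y, fun ξ => ?_⟩
    have h1 : Submodule.span A (T : Set (N × N)) ≤ LinearMap.ker
        (ε.comp (LinearMap.fst A N N) - LinearMap.snd A N N) := by
      rw [Submodule.span_le]
      intro q hq
      obtain ⟨b', hb', rfl⟩ := hT hq
      change ε b' - (if b' = x then b' else 0) = 0
      split_ifs with h
      · rw [h, hεx, sub_self]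
      · rw [sub_zero]
        exact hεF b' (Finset.mem_erase.2 ⟨h, Finset.mem_image.2 ⟨_, hq, rfl⟩⟩)
    have h2 : (y (k ξ), b ξ) ∈ Submodule.span A (t : Set (N × N)) := by
      rw [ht]
      exact ⟨ξ, rfl⟩
    have h3 := h1 (Submodule.span_le.2 htT h2)
    exact sub_eq_zero.1 h3)
  have hex : e x = x := by
    have := he _ (Submodule.subset_span ⟨x, hxB, rfl⟩)
    simpa using this
  have heb : ∀ b ∈ B, b ≠ x → e b = 0 := by
    intro b hb hbx
    have := he _ (Submodule.subset_span ⟨b, hb, rfl⟩)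
    simpa [hbx] using this
  obtain ⟨n, hn⟩ := indep_nilp hN hB (e - e ^ 2) (by
    intro b hb
    change e b - (e ^ 2) b = 0
    rw [pow_two]
    change e b - e (e b) = 0
    by_cases hbx : b = x
    · rw [hbx, hex, hex, sub_self]
    · rw [heb b hb hbx, map_zero, sub_zero])
  have hn1 : (e - e ^ 2) ^ (n + 1) = 0 := by rw [pow_succ, hn, zero_mul]
  have hid := isIdempotentElem_one_sub_one_sub_pow_pow e (n + 1) hn1
  refine ⟨_, hid, ?_, ?_⟩
  · have h1 : ∀ k : ℕ, (e ^ k) x = x := by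
      intro k
      induction k with
      | zero => rfl
      | succ k ih =>
        rw [pow_succ]
        change (e ^ k) (e x) = x
        rw [hex, ih]
    change x - ((1 - e ^ (n + 1)) ^ (n + 1)) x = x
    rw [pow_succ (1 - e ^ (n + 1))]
    change x - ((1 - e ^ (n + 1)) ^ n) (x - (e ^ (n + 1)) x) = x
    rw [h1, sub_self, map_zero, sub_zero]
  · intro ε hε hεx
    refine indep_nilp hN hB ε fun b hb => ?_
    by_cases hbx : b = x
    · rw [hbx, hεx]
    rw [← hε]
    have h1 : (e ^ (n + 1)) b = 0 := by
      rw [pow_succ]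
      change (e ^ n) (e b) = 0
      rw [heb b hb hbx, map_zero]
    have h2 : ∀ k : ℕ, ((1 - e ^ (n + 1)) ^ k) b = b := by
      intro k
      induction k with
      | zero => rfl
      | succ k ih =>
        rw [pow_succ]
        change ((1 - e ^ (n + 1)) ^ k) (b - (e ^ (n + 1)) b) = b
        rw [h1, sub_zero, ih]
    change ε (b - ((1 - e ^ (n + 1)) ^ (n + 1)) b) = 0
    rw [h2, sub_self, map_zero]

/-- fixing a nonzero element implies bijective -/
theorem fix_unit (hN : IsEndofinite A N) (hI : IsIndecomposableModule A N) (x : N) (hx : x ≠ 0)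
    (θ : Module.End A N) (h : θ x = x) : Function.Bijective θ := by
  obtain ⟨p, hp, hpx, hnil⟩ := core hN x
  have hpp : ∀ n, p (p n) = p n := fun n => LinearMap.congr_fun hp n
  have hproj : LinearMap.IsProj (LinearMap.range p) p :=
    ⟨fun n => ⟨n, rfl⟩, by rintro _ ⟨n, rfl⟩; exact hpp n⟩
  have hp1 : p = 1 := by
    rcases hI.2 _ _ _ _ _ _ (Submodule.prodEquivOfIsCompl _ _ hproj.isCompl).symm with h' | h'
    · exfalso
      have := Subsingleton.elim (⟨x, x, hpx⟩ : LinearMap.range p) 0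
      exact hx (congrArg Subtype.val this)
    · ext n
      have := Subsingleton.elim (⟨p n - n, by simp [hpp]⟩ : LinearMap.ker p) 0
      exact sub_eq_zero.1 (congrArg Subtype.val this)
  have hn := hnil (1 - θ) (by rw [hp1, mul_one]) (by
    change x - θ x = 0
    rw [h, sub_self])
  have hu := hn.isUnit_one_sub
  rw [sub_sub_cancel] at hu
  exact (Module.End.isUnit_iff θ).1 hu

theorem exists_indec (hN : IsEndofinite A N) [Nontrivial N] :
    ∃ p : Module.End A N, p * p = p ∧ IsIndecomposableModule A (LinearMap.range p) := by
  obtain ⟨_, _⟩ := isFiniteLength_iff_isNoetherian_isArtinian.1 hN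
  obtain ⟨a, ha⟩ := IsAtomic.exists_atom (Submodule (Module.End A N) N)
  obtain ⟨x, hxa, hx⟩ := Submodule.exists_mem_ne_zero_of_ne_bot ha.1
  have hsimp : ∀ f : Module.End A N, f x ≠ 0 → ∃ ε : Module.End A N, ε (f x) = x := by
    intro f hf
    have h1 : Submodule.span (Module.End A N) {f x} ≤ a := by
      rw [Submodule.span_singleton_le_iff_mem]
      exact a.smul_mem f hxa
    rcases ha.le_iff.1 h1 with h | h
    · exact absurd (Submodule.span_singleton_eq_bot.1 h) hf
    · rw [← h] at hxa
      exact Submodule.mem_span_singleton.1 hxa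
  obtain ⟨p, hp, hpx, hnil⟩ := core hN x
  have hpp : ∀ n, p (p n) = p n := fun n => LinearMap.congr_fun hp n
  have key : ∀ f g : Module.End A N, f * p = f → p * g = g → f * g = 0 → f x ≠ 0 → g = 0 := by
    intro f g hfp hpg hfg hfx
    obtain ⟨ε, hε⟩ := hsimp f hfx
    obtain ⟨n, hn⟩ := hnil (p - p * ε * f) (by rw [sub_mul, hp, mul_assoc, hfp]) (by
      change p x - p (ε (f x)) = 0
      rw [hε, sub_self])
    have h1 : ∀ k : ℕ, (p - p * ε * f) ^ k * g = g := by
      intro k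
      induction k with
      | zero => simp
      | succ k ih =>
        rw [pow_succ, mul_assoc, sub_mul, hpg, mul_assoc _ f g, hfg, mul_zero, sub_zero, ih]
    have := h1 n
    rw [hn, zero_mul] at this
    exact this.symm
  refine ⟨p, hp, ⟨⟨⟨x, x, hpx⟩, 0, fun h => hx (congrArg Subtype.val h)⟩, ?_⟩⟩
  intro N₁ N₂ _ _ _ _ φ
  let ι : LinearMap.range p →ₗ[A] N := (LinearMap.range p).subtype
  let π : N →ₗ[A] LinearMap.range p := p.rangeRestrict
  have hπι : ∀ m, π (ι m) = m := by
    rintro ⟨_, n, rfl⟩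
    exact Subtype.ext (hpp n)
  have hιπ : ∀ n, ι (π n) = p n := fun n => rfl
  have hπp : ∀ n, π (p n) = π n := fun n => Subtype.ext (hpp n)
  have hpι : ∀ m, p (ι m) = ι m := by
    rintro ⟨_, n, rfl⟩
    exact hpp n
  let f : Module.End A N := ι.comp (φ.symm.toLinearMap.comp
    (((LinearMap.inl A N₁ N₂).comp (LinearMap.fst A N₁ N₂)).comp (φ.toLinearMap.comp π)))
  let g : Module.End A N := ι.comp (φ.symm.toLinearMap.comp
    (((LinearMap.inr A N₁ N₂).comp (LinearMap.snd A N₁ N₂)).comp (φ.toLinearMap.comp π)))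
  have hf : ∀ n, f n = ι (φ.symm ((φ (π n)).1, 0)) := fun n => rfl
  have hg : ∀ n, g n = ι (φ.symm (0, (φ (π n)).2)) := fun n => rfl
  have hfp : f * p = f := by
    ext n
    change f (p n) = f n
    rw [hf, hf, hπp]
  have hgp : g * p = g := by
    ext n
    change g (p n) = g n
    rw [hg, hg, hπp]
  have hpf : p * f = f := by
    ext n
    change p (f n) = f n
    rw [hf, hpι]
  have hpg : p * g = g := by
    ext n
    change p (g n) = g n
    rw [hg, hpι]
  have hfg : f * g = 0 := by
    ext n
    change f (g n) = 0
    rw [hf, hg, hπι, LinearEquiv.apply_symm_apply, Prod.mk_zero_zero, map_zero, map_zero]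
  have hgf : g * f = 0 := by
    ext n
    change g (f n) = 0
    rw [hg, hf, hπι, LinearEquiv.apply_symm_apply, Prod.mk_zero_zero, map_zero, map_zero]
  have hsum : f x + g x = x := by
    rw [hf, hg, ← map_add, ← map_add]
    simp only [Prod.mk_add_mk, add_zero, zero_add]
    change ι (φ.symm (φ (π x))) = x
    rw [LinearEquiv.symm_apply_apply, hιπ, hpx]
  have hιinj : ∀ m, ι m = 0 → m = 0 := fun m h => Subtype.ext h
  by_cases hfx : f x = 0
  · have hgx : g x ≠ 0 := by
      rw [hfx, zero_add] at hsum
      rw [hsum]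
      exact hx
    have h0 := key g f hgp hpf hgf hgx
    left
    refine subsingleton_of_forall_eq 0 fun n₁ => ?_
    have h1 : f (ι (φ.symm (n₁, 0))) = 0 := by rw [h0]; rfl
    rw [hf, hπι, LinearEquiv.apply_symm_apply] at h1
    have := (LinearEquiv.map_eq_zero_iff _).1 (hιinj _ h1)
    exact congrArg Prod.fst this
  · have h0 := key f g hfp hpg hfg hfx
    right
    refine subsingleton_of_forall_eq 0 fun n₁ => ?_
    have h1 : g (ι (φ.symm (0, n₁))) = 0 := by rw [h0]; rfl
    rw [hg, hπι, LinearEquiv.apply_symm_apply] at h1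
    have := (LinearEquiv.map_eq_zero_iff _).1 (hιinj _ h1)
    exact congrArg Prod.snd this

end V
end CB

namespace CB
section Z
variable {A : Type} [Ring A] {M N : Type} [AddCommGroup M] [Module A M]
  [AddCommGroup N] [Module A N]

/-- sum of formulas -/
def Pt.sum (d d' : Pt A) : Pt A := ⟨d.Y × d'.Y, (d.η, d'.η)⟩

/-- the map picking the point -/
abbrev Pt.k (d : Pt A) : A →ₗ[A] d.Y := LinearMap.toSpanSingleton A d.Y d.η

/-- conjunction of formulas -/
def Pt.conj (d d' : Pt A) : Pt A := ⟨PO d.k d'.k, pinl d.k d'.k d.η⟩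

theorem mem_sum (d d' : Pt A) (n : N) :
    n ∈ pp N (d.sum d') ↔ ∃ a ∈ pp N d, ∃ b ∈ pp N d', a + b = n := by
  constructor
  · rintro ⟨(y : d.Y × d'.Y →ₗ[A] N), rfl⟩
    refine ⟨_, ⟨y.comp (LinearMap.inl A _ _), rfl⟩, _, ⟨y.comp (LinearMap.inr A _ _), rfl⟩, ?_⟩
    change y (d.η, 0) + y (0, d'.η) = y (d.η, d'.η)
    rw [← map_add]
    simp
  · rintro ⟨_, ⟨y, rfl⟩, _, ⟨y', rfl⟩, rfl⟩
    exact ⟨y.coprod y', rfl⟩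

theorem po_pt (d d' : Pt A) : pinl d.k d'.k d.η = pinr d.k d'.k d'.η := by
  have := po_cond d.k d'.k (1 : A)
  simpa using this

theorem mem_pconj (d d' : Pt A) (n : N) :
    n ∈ pp N (d.conj d') ↔ n ∈ pp N d ∧ n ∈ pp N d' := by
  constructor
  · rintro ⟨(y : PO d.k d'.k →ₗ[A] N), rfl⟩
    refine ⟨⟨y.comp (pinl d.k d'.k), rfl⟩, ⟨y.comp (pinr d.k d'.k), ?_⟩⟩
    change y (pinr d.k d'.k d'.η) = y (pinl d.k d'.k d.η)
    rw [po_pt]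
  · rintro ⟨⟨y, hy⟩, ⟨y', hy'⟩⟩
    have hc : ∀ a, y (d.k a) = y' (d'.k a) := by
      intro a
      simp [hy, hy']
    refine ⟨pdesc d.k d'.k y y' hc, ?_⟩
    exact (pdesc_inl d.k d'.k y y' hc d.η).trans hy

theorem claimZ (hM : IsEndofinite A M) (hMI : IsIndecomposableModule A M)
    (hN : IsEndofinite A N) (hNI : IsIndecomposableModule A N)
    (h : ∀ (X Y : Type) [AddCommGroup X] [Module A X] [AddCommGroup Y] [Module A Y]
      [Module.FinitePresentation A X] [Module.FinitePresentation A Y] (f : X →ₗ[A] Y),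
      Inj M f → Inj N f) : Nonempty (M ≃ₗ[A] N) := by
  obtain ⟨hNn, -⟩ := id hNI
  obtain ⟨φ₀, hφ₀, hmin₀⟩ := ppdcc_endo hN {d | pp N d ≠ ⊥} (by
    refine ⟨⟨A, 1⟩, ?_⟩
    obtain ⟨n, hn⟩ := exists_ne (0 : N)
    intro hb
    apply hn
    rw [← Submodule.mem_bot (Module.End A N), ← hb]
    exact ⟨LinearMap.toSpanSingleton A N n, by simp⟩)
  obtain ⟨φ, hφ, hmin⟩ := ppdcc_endo hM {d | pp N d = pp N φ₀} ⟨φ₀, rfl⟩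
  change pp N φ = pp N φ₀ at hφ
  obtain ⟨y₀, hy₀, hy₀0⟩ := Submodule.exists_mem_ne_zero_of_ne_bot
    (show pp N φ ≠ ⊥ by rw [hφ]; exact hφ₀)
  obtain ⟨ψ, ⟨hψ, hψφ⟩, hmax⟩ := ppacc_endo hM {d | pp N d = ⊥ ∧ pp M d ≤ pp M φ} (by
    refine ⟨⟨PUnit, 0⟩, ?_, ?_⟩
    · rw [eq_bot_iff]
      rintro _ ⟨y, rfl⟩
      exact map_zero y
    · rintro _ ⟨y, rfl⟩
      have : y (0 : PUnit) = 0 := map_zero y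
      change y (0 : PUnit) ∈ _
      rw [this]
      exact Submodule.zero_mem _)
  have hnle : ¬ pp M φ ≤ pp M ψ := by
    intro hle
    have hi : Inj M (pinl φ.k ψ.k) := by
      intro u
      obtain ⟨v, hv⟩ := hle ⟨u, rfl⟩
      have hc : ∀ a, u (φ.k a) = v (ψ.k a) := by
        intro a
        simp [hv]
      refine ⟨pdesc φ.k ψ.k u v hc, ?_⟩
      ext a
      exact pdesc_inl φ.k ψ.k u v hc a
    obtain ⟨u, hu⟩ := id hy₀
    obtain ⟨w, hw⟩ := h _ _ _ hi u
    apply hy₀0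
    rw [← Submodule.mem_bot (Module.End A N), ← hψ]
    refine ⟨w.comp (pinr φ.k ψ.k), ?_⟩
    rw [LinearMap.comp_apply, ← po_pt, ← hu, ← hw]
    rfl
  obtain ⟨x, hxφ, hxψ⟩ := Set.not_subset.1 hnle
  have hx0 : x ≠ 0 := by
    rintro rfl
    exact hxψ (Submodule.zero_mem _)
  have hle0 : ∀ θ : Pt A, pp N (φ.conj θ) ≤ pp N φ₀ := by
    intro θ z hz
    rw [← hφ]
    exact ((mem_pconj φ θ z).1 hz).1
  have hleM : ∀ θ : Pt A, pp M (φ.conj θ) ≤ pp M φ := fun θ z hz => ((mem_pconj φ θ z).1 hz).1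
  have h1 : ∀ θ : Pt A, x ∈ pp M θ → y₀ ∈ pp N θ := by
    intro θ hxθ
    by_cases hb : pp N (φ.conj θ) = ⊥
    · exfalso
      have h2 := hmax ((φ.conj θ).sum ψ) ⟨by
          rw [eq_bot_iff]
          intro z hz
          obtain ⟨a, ha, b, hb', rfl⟩ := (mem_sum _ _ z).1 hz
          rw [hb] at ha
          rw [hψ] at hb'
          exact Submodule.add_mem _ ha hb', by
          intro z hz
          obtain ⟨a, ha, b, hb', rfl⟩ := (mem_sum _ _ z).1 hz
          exact Submodule.add_mem _ (hleM θ ha) (hψφ hb')⟩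
        (fun z hz => (mem_sum _ _ z).2 ⟨0, Submodule.zero_mem _, z, hz, zero_add z⟩)
      apply hxψ
      change x ∈ pp M ψ
      rw [← h2]
      exact (mem_sum _ _ x).2 ⟨x, (mem_pconj _ _ x).2 ⟨hxφ, hxθ⟩, 0, Submodule.zero_mem _,
        add_zero x⟩
    · have h2 := hmin₀ _ hb (hle0 θ)
      rw [hφ, ← h2] at hy₀
      exact ((mem_pconj _ _ _).1 hy₀).2
  have h2 : ∀ θ : Pt A, y₀ ∈ pp N θ → x ∈ pp M θ := by
    intro θ hyθ
    have hb : pp N (φ.conj θ) ≠ ⊥ := by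
      intro hb
      apply hy₀0
      rw [← Submodule.mem_bot (Module.End A N), ← hb]
      exact (mem_pconj _ _ _).2 ⟨hy₀, hyθ⟩
    have h3 := hmin₀ _ hb (hle0 θ)
    have h4 := hmin _ h3 (hleM θ)
    have hx' : x ∈ pp M φ := hxφ
    rw [← h4] at hx'
    exact ((mem_pconj _ _ _).1 hx').2
  obtain ⟨e, he⟩ := exists_hom_pt (ppdcc_endo hN) x y₀ h1
  obtain ⟨e', he'⟩ := exists_hom_pt (ppdcc_endo hM) y₀ x h2
  have b1 := fix_unit hM hMI x hx0 (e'.comp e) (by rw [LinearMap.comp_apply, he, he'])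
  have b2 := fix_unit hN hNI y₀ hy₀0 (e.comp e') (by rw [LinearMap.comp_apply, he', he])
  refine ⟨LinearEquiv.ofBijective e ⟨?_, ?_⟩⟩
  · have := b1.1
    rw [LinearMap.coe_comp] at this
    exact this.of_comp
  · have := b2.2
    rw [LinearMap.coe_comp] at this
    exact this.of_comp

theorem exists_sigInj {χ : Fn A} (hχ : IsSubadditive A χ) (h0 : FpNonzero A χ) :
    ∃ (M : Type) (_ : AddCommGroup M) (_ : Module A M),
      IsEndofinite A M ∧ IsIndecomposableModule A M ∧ SigInj χ M := by
  obtain ⟨X₀, _, _, _, hX⟩ := h0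
  obtain ⟨N, _, _, _, hN⟩ := exists_inj hχ X₀ hX
  have hN' : SigInj χ N := hN
  obtain ⟨p, hp, hI⟩ := exists_indec (endofinite_of hχ hN')
  have hs : SigInj χ (LinearMap.range p) := by
    intro X Y _ _ _ _ _ _ f hf x
    obtain ⟨y, hy⟩ := hN' X Y f hf ((LinearMap.range p).subtype.comp x)
    refine ⟨p.rangeRestrict.comp y, ?_⟩
    ext a
    change p (y (f a)) = x a
    have h1 : y (f a) = x a := LinearMap.congr_fun hy a
    rw [h1]
    obtain ⟨n, hn⟩ := (x a).2
    rw [← hn]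
    exact LinearMap.congr_fun hp n
  exact ⟨LinearMap.range p, inferInstance, inferInstance, endofinite_of hχ hs, hI, hs⟩

theorem part1 (hM : IsEndofinite A M) (hMI : IsIndecomposableModule A M) :
    IsIrreducibleSubadditive A (chiMod A M) := by
  obtain ⟨hMn, -⟩ := id hMI
  have hA := chiM_A hM
  refine ⟨chiM_sub hM, ⟨A, inferInstance, inferInstance, inferInstance, hA⟩, ?_⟩
  rintro ⟨χ₁, χ₂, hs₁, hs₂, h₁, h₂, heq⟩
  have key : ∀ χ : Fn A, IsSubadditive A χ → FpNonzero A χ →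
      (∀ (X Y : Type) [AddCommGroup X] [Module A X] [AddCommGroup Y] [Module A Y]
      [Module.FinitePresentation A X] [Module.FinitePresentation A Y] (f : X →ₗ[A] Y),
      Sig (chiMod A M) f → Sig χ f) → chiMod A M A ≤ χ A := by
    intro χ hχ h0 hS
    obtain ⟨N, _, _, hN, hNI, hNS⟩ := exists_sigInj hχ h0
    obtain ⟨e⟩ := claimZ hM hMI hN hNI (by
      intro X Y _ _ _ _ _ _ f hf
      exact hNS X Y f (hS X Y f ((sig_iff hM f).2 hf)))
    refine chiM_le hχ (X := A) (M := M) ?_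
    intro X Y _ _ _ _ _ _ f hf x
    obtain ⟨y, hy⟩ := hNS X Y f hf (e.toLinearMap.comp x)
    refine ⟨e.symm.toLinearMap.comp y, ?_⟩
    ext a
    change e.symm (y (f a)) = x a
    have h1 : y (f a) = e (x a) := LinearMap.congr_fun hy a
    rw [h1, LinearEquiv.symm_apply_apply]
  have k₁ := key χ₁ hs₁ h₁ (by
    intro X Y _ _ _ _ _ _ f hf
    unfold Sig at hf ⊢
    have c1 := coker_le hs₁ f
    have c2 := coker_le hs₂ f
    have e1 := heq X inferInstance
    have e2 := heq Y inferInstance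
    have e3 := heq (Y ⧸ LinearMap.range f) inferInstance
    simp only at e1 e2 e3
    omega)
  have k₂ := key χ₂ hs₂ h₂ (by
    intro X Y _ _ _ _ _ _ f hf
    unfold Sig at hf ⊢
    have c1 := coker_le hs₁ f
    have c2 := coker_le hs₂ f
    have e1 := heq X inferInstance
    have e2 := heq Y inferInstance
    have e3 := heq (Y ⧸ LinearMap.range f) inferInstance
    simp only at e1 e2 e3
    omega)
  have := heq A inferInstance
  simp only at this
  omega

theorem part2 (χ : Fn A) (hχ : IsIrreducibleSubadditive A χ) :
    ∃ (M : Type) (_ : AddCommGroup M) (_ : Module A M),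
        IsEndofinite A M ∧ IsIndecomposableModule A M ∧ FpEq A χ (chiMod A M) := by
  obtain ⟨hs, h0, hirr⟩ := hχ
  obtain ⟨M, _, _, hM, hMI, hMS⟩ := exists_sigInj hs h0
  obtain ⟨hMn, -⟩ := id hMI
  refine ⟨M, _, _, hM, hMI, ?_⟩
  by_contra hne
  apply hirr
  have hsM := chiM_sub hM
  refine ⟨chiMod A M, fun X _ _ => χ X - chiMod A M X, hsM, ⟨?_, ?_, ?_⟩,
    ⟨A, inferInstance, inferInstance, inferInstance, chiM_A hM⟩, ?_, ?_⟩
  · intro X Y _ _ _ _ hX hY e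
    simp only
    rw [hs.1 X Y hX hY e, hsM.1 X Y hX hY e]
  · intro X Y _ _ _ _ hX hY
    simp only
    rw [hs.2.1 X Y hX hY, hsM.2.1 X Y hX hY]
    have := chiM_le hs (X := X) hMS
    have := chiM_le hs (X := Y) hMS
    omega
  · intro X Y Z _ _ _ _ _ _ hX hY hZ f g hfg hg
    simp only
    have := chiM_le hs (X := X) hMS
    have := chiM_le hs (X := Y) hMS
    have := chiM_le hs (X := Z) hMS
    have := chiM_diff hs hMS f g hfg hg
    omega
  · by_contra hz
    apply hne
    intro X _ _ hX
    by_contra hXne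
    have := chiM_le hs (X := X) hMS
    exact hz ⟨X, _, _, hX, by
      simp only
      omega⟩
  · intro X _ _ hX
    have := chiM_le hs (X := X) hMS
    simp only
    omega

theorem part3 (hM : IsEndofinite A M) (hMI : IsIndecomposableModule A M)
    (hN : IsEndofinite A N) (hNI : IsIndecomposableModule A N)
    (h : FpEq A (chiMod A M) (chiMod A N)) : Nonempty (M ≃ₗ[A] N) := by
  refine claimZ hM hMI hN hNI ?_
  intro X Y _ _ _ _ _ _ f hf
  rw [← sig_iff hN]
  rw [← sig_iff hM] at hf
  unfold Sig at hf ⊢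
  rw [← h X inferInstance, ← h Y inferInstance, ← h (Y ⧸ LinearMap.range f) inferInstance]
  exact hf

end Z
end CB

/-- Crawley-Boevey's correspondence: `M ↦ χ_M` is a bijection between
isomorphism classes of indecomposable endofinite `A`-modules and irreducible subadditive
functions. -/
theorem statement18 (A : Type) [Ring A] (hA : FpAbelian A) :
    (∀ (M : Type) [AddCommGroup M] [Module A M],
      IsEndofinite A M → IsIndecomposableModule A M →
      IsIrreducibleSubadditive A (chiMod A M)) ∧
    (∀ χ : (X : Type) → [AddCommGroup X] → [Module A X] → ℕ,
      IsIrreducibleSubadditive A χ →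
      ∃ (M : Type) (_ : AddCommGroup M) (_ : Module A M),
        IsEndofinite A M ∧ IsIndecomposableModule A M ∧ FpEq A χ (chiMod A M)) ∧
    (∀ (M N : Type) [AddCommGroup M] [Module A M] [AddCommGroup N] [Module A N],
      IsEndofinite A M → IsIndecomposableModule A M →
      IsEndofinite A N → IsIndecomposableModule A N →
      FpEq A (chiMod A M) (chiMod A N) → Nonempty (M ≃ₗ[A] N)) := by
  exact ⟨fun M _ _ hM hMI => CB.part1 hM hMI, fun χ hχ => CB.part2 χ hχ,
    fun M N _ _ _ _ hM hMI hN hNI h => CB.part3 hM hMI hN hNI h⟩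
end

section
/- Let A be a ring and M an endofinite A-module. Then χ_{M ⊕ M} = χ_M; that is, for every finitely presented A-module X, the composition length of Hom_A(X, M ⊕ M) over End_A(M ⊕ M) equals the composition length of Hom_A(X, M) over End_A(M). -/
theorem compLength_eq_toNat (R : Type) [Ring R] (M : Type) [AddCommGroup M] [Module R M] :
    compLength R M = (Module.length R M).toNat := by
  unfold compLength
  split_ifs with h
  · rw [← Module.length_compositionSeries h.choose h.choose_spec.1 h.choose_spec.2]
    simp
  · have : Module.length R M = ⊤ := by
      by_contra hne
      exact h (isFiniteLength_iff_exists_compositionSeries.mp (Module.length_ne_top_iff.mp hne))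
    simp [this]

section
variable {A : Type} [Ring A] {M : Type} [AddCommGroup M] [Module A M]
  {X : Type} [AddCommGroup X] [Module A X]

def upSub (N : Submodule (Module.End A M) (X →ₗ[A] M)) :
    Submodule (Module.End A (M × M)) (X →ₗ[A] (M × M)) where
  carrier := {f | LinearMap.fst A M M ∘ₗ f ∈ N ∧ LinearMap.snd A M M ∘ₗ f ∈ N}
  zero_mem' := by simp
  add_mem' := by
    rintro f g ⟨h1, h2⟩ ⟨h3, h4⟩
    refine ⟨?_, ?_⟩
    · rw [LinearMap.comp_add]; exact N.add_mem h1 h3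
    · rw [LinearMap.comp_add]; exact N.add_mem h2 h4
  smul_mem' := by
    rintro e f ⟨h1, h2⟩
    have key : ∀ p : (M × M) →ₗ[A] M, p ∘ₗ (e • f) =
        ((p ∘ₗ e ∘ₗ LinearMap.inl A M M : Module.End A M) • (LinearMap.fst A M M ∘ₗ f)) +
        ((p ∘ₗ e ∘ₗ LinearMap.inr A M M : Module.End A M) • (LinearMap.snd A M M ∘ₗ f)) := by
      intro p
      ext x
      simp [← map_add]
    refine ⟨?_, ?_⟩
    · rw [key]; exact N.add_mem (N.smul_mem _ h1) (N.smul_mem _ h2)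
    · rw [key]; exact N.add_mem (N.smul_mem _ h1) (N.smul_mem _ h2)

def downSub (N : Submodule (Module.End A (M × M)) (X →ₗ[A] (M × M))) :
    Submodule (Module.End A M) (X →ₗ[A] M) where
  carrier := {g | LinearMap.inl A M M ∘ₗ g ∈ N}
  zero_mem' := by simp
  add_mem' := by
    intro f g h1 h2
    change LinearMap.inl A M M ∘ₗ (f + g) ∈ N
    rw [LinearMap.comp_add]; exact N.add_mem h1 h2
  smul_mem' := by
    intro e f h
    have : LinearMap.inl A M M ∘ₗ (e • f) =
        ((LinearMap.inl A M M ∘ₗ e ∘ₗ LinearMap.fst A M M : Module.End A (M × M)) •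
          (LinearMap.inl A M M ∘ₗ f)) := by
      ext x <;> simp
    change LinearMap.inl A M M ∘ₗ (e • f) ∈ N
    rw [this]
    exact N.smul_mem _ h

theorem down_up (N : Submodule (Module.End A M) (X →ₗ[A] M)) : downSub (upSub N) = N := by
  ext g
  change (LinearMap.fst A M M ∘ₗ LinearMap.inl A M M ∘ₗ g ∈ N ∧
    LinearMap.snd A M M ∘ₗ LinearMap.inl A M M ∘ₗ g ∈ N) ↔ _
  have h1 : LinearMap.fst A M M ∘ₗ LinearMap.inl A M M ∘ₗ g = g := by ext x; simp
  have h2 : LinearMap.snd A M M ∘ₗ LinearMap.inl A M M ∘ₗ g = 0 := by ext x; simp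
  rw [h1, h2]
  simp

theorem up_down (N : Submodule (Module.End A (M × M)) (X →ₗ[A] (M × M))) :
    upSub (downSub N) = N := by
  ext f
  change (LinearMap.inl A M M ∘ₗ LinearMap.fst A M M ∘ₗ f ∈ N ∧
    LinearMap.inl A M M ∘ₗ LinearMap.snd A M M ∘ₗ f ∈ N) ↔ _
  constructor
  · rintro ⟨h1, h2⟩
    have : f = LinearMap.inl A M M ∘ₗ LinearMap.fst A M M ∘ₗ f +
        (LinearMap.inr A M M ∘ₗ LinearMap.fst A M M : Module.End A (M × M)) •
          (LinearMap.inl A M M ∘ₗ LinearMap.snd A M M ∘ₗ f) := by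
      ext x <;> simp
    rw [this]
    exact N.add_mem h1 (N.smul_mem _ h2)
  · intro h
    exact ⟨N.smul_mem (LinearMap.inl A M M ∘ₗ LinearMap.fst A M M : Module.End A (M × M)) h,
      N.smul_mem (LinearMap.inl A M M ∘ₗ LinearMap.snd A M M : Module.End A (M × M)) h⟩

def subIso : Submodule (Module.End A (M × M)) (X →ₗ[A] (M × M)) ≃o
    Submodule (Module.End A M) (X →ₗ[A] M) where
  toFun := downSub
  invFun := upSub
  left_inv := up_down
  right_inv := down_up
  map_rel_iff' := by
    intro a b
    constructor
    · intro h
      rw [← up_down a, ← up_down b]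
      exact fun f hf => ⟨h hf.1, h hf.2⟩
    · exact fun h f hf => h hf

end

/-- For an endofinite `A`-module `M` one has `χ_{M ⊕ M} = χ_M` on all
finitely presented `A`-modules. -/
theorem statement19 (A : Type) [Ring A] (M : Type) [AddCommGroup M] [Module A M]
    (hM : IsEndofinite A M) :
    ∀ (X : Type) [AddCommGroup X] [Module A X], Module.FinitePresentation A X →
      chiMod A (M × M) X = chiMod A M X := by
  intro X _ _ _
  unfold chiMod
  rw [compLength_eq_toNat, compLength_eq_toNat]
  congr 1
  have h := Order.krullDim_eq_of_orderIso (subIso (A := A) (M := M) (X := X))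
  rw [← Module.coe_length, ← Module.coe_length] at h
  exact_mod_cast h
end
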